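/- arXiv:1005.3756 — 5 statements merged into one kernel-verified Lean document; each statement's English description precedes it below -/
import Mathlib

section
/- Let n ≥ 11 be odd. Then there exist three (n−2)-cycles x, y, z in the alternating group A_n with xyz = 1 such that ⟨x, y⟩ = A_n. -/
/-!
Let `x` be any `(n-2)`-cycle, `n` odd. We look for `t` such that `x * t` is conjugate to `x` and
`x ^ 2 * t` is conjugate to `x ^ 2`. Then `y = x * t` and `z = (x * y)⁻¹ = (x ^ 2 * t)⁻¹` are
`(n-2)`-cycles, because the square of an odd cycle is a cycle with the same support. Since
`x * ⁅x⁻¹, σ⁆ = σ * x * σ⁻¹`, this amounts to solving `t = ⁅x⁻¹, σ⁆ = ⁅(x ^ 2)⁻¹, τ⁆`. A solution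
for a `7`-cycle on nine points is transported to every `n ≥ 9`: as `σ` and `τ` fix the first one
or two points of the cycle, the commutators do not see what the cycle does after its seventh point.

The group `⟨x, y⟩ = ⟨x, t⟩` is transitive, as `y` moves both fixed points of `x`. It is primitive:
a block through a fixed point of `x` is a union of `x`-orbits, so it either contains the support of
`x` or has at most two points, while the size of a block divides the odd number `n`. Finally `t ^ 4`
is a `3`-cycle, so Jordan's theorem applies.
-/

open Equiv Equiv.Perm MulAction
open scoped Pointwise commutatorElement

section Primitivity

variable {α : Type*} {G : Subgroup (Perm α)} {x y : Perm α}

theorem isPretransitive_of_isCycle_of_isCycle (hx : x.IsCycle) (hy : y.IsCycle)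
    (hxG : x ∈ G) (hyG : y ∈ G) (hcover : ∀ a, x a ≠ a ∨ y a ≠ a)
    (hmeet : ∃ a, x a ≠ a ∧ y a ≠ a) : IsPretransitive G α := by
  obtain ⟨a, hxa, hya⟩ := hmeet
  refine (isPretransitive_iff_base a).mpr fun b ↦ ?_
  rcases hcover b with hb | hb
  · obtain ⟨i, hi⟩ := hx.exists_zpow_eq hxa hb
    exact ⟨⟨x ^ i, zpow_mem hxG i⟩, hi⟩
  · obtain ⟨i, hi⟩ := hy.exists_zpow_eq hya hb
    exact ⟨⟨y ^ i, zpow_mem hyG i⟩, hi⟩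

theorem setOf_apply_ne_subset_of_smul_eq (hx : x.IsCycle) {B : Set α} (hB : x • B = B)
    (hmeet : ∃ b ∈ B, x b ≠ b) : {a | x a ≠ a} ⊆ B := by
  obtain ⟨b, hbB, hb⟩ := hmeet
  intro a ha
  obtain ⟨i, rfl⟩ := hx.exists_zpow_eq hb ha
  have hi : x ^ i ∈ stabilizer (Perm α) B := zpow_mem (mem_stabilizer_iff.mpr hB) i
  rw [← mem_stabilizer_iff.mp hi]
  exact Set.smul_mem_smul_set hbB

theorem minFac_le_and_add_minFac_le_of_dvd {n d : ℕ} (hdvd : d ∣ n) (hd : 1 < d) (hdn : d < n) :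
    n.minFac ≤ d ∧ d + n.minFac ≤ n := by
  refine ⟨Nat.minFac_le_of_dvd hd hdvd, ?_⟩
  obtain ⟨k, rfl⟩ := hdvd
  have hk : 1 < k := by nlinarith
  have hmin : (d * k).minFac ≤ k := Nat.minFac_le_of_dvd hk (Dvd.intro_left d rfl)
  nlinarith

theorem isPreprimitive_of_isCycle_of_card_lt [Fintype α] [DecidableEq α] [IsPretransitive G α]
    (hx : x.IsCycle) (hxG : x ∈ G) (hfix : x.support.card < Fintype.card α)
    (hlt : Fintype.card α < x.support.card + (Fintype.card α).minFac) :
    IsPreprimitive G α := by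
  obtain ⟨a, -, ha⟩ : ∃ a ∈ Finset.univ, a ∉ x.support :=
    Finset.exists_mem_notMem_of_card_lt_card (by rwa [Finset.card_univ])
  rw [notMem_support] at ha
  refine .of_isTrivialBlock_base a fun {B} haB hB ↦ ?_
  have hxB : x • B = B :=
    hB.smul_eq_of_mem (g := ⟨x, hxG⟩) haB (by rwa [Subgroup.mk_smul, Perm.smul_def, ha])
  by_contra hB_nontrivial
  obtain ⟨hB_not_subsingleton, hB_ne_univ⟩ := not_or.mp hB_nontrivial
  obtain ⟨hmin_le, hadd_le⟩ : (Fintype.card α).minFac ≤ B.ncard ∧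
      B.ncard + (Fintype.card α).minFac ≤ Fintype.card α := by
    apply minFac_le_and_add_minFac_le_of_dvd
    · simpa using hB.ncard_dvd_card ⟨a, haB⟩
    · exact Set.one_lt_ncard_iff_nontrivial.mpr (Set.not_subsingleton_iff.mp hB_not_subsingleton)
    · simpa using Set.ncard_lt_card hB_ne_univ
  by_cases hmeet : ∃ b ∈ B, x b ≠ b
  · have hsub : (x.support : Set α) ⊆ B := by
      rw [coe_support_eq_set_support]
      exact setOf_apply_ne_subset_of_smul_eq hx hxB hmeet
    have hle := Set.ncard_le_ncard hsub
    rw [Set.ncard_coe_finset] at hle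
    omega
  · push Not at hmeet
    have hsub : B ⊆ (x.supportᶜ : Finset α) := fun b hb ↦ by simpa using hmeet b hb
    have hle := Set.ncard_le_ncard hsub
    rw [Set.ncard_coe_finset, Finset.card_compl] at hle
    omega

end Primitivity

section ViaEmbedding

variable {ι α : Type*} {e : ι ↪ α} {x : Perm α} {c s : Perm ι}

theorem viaEmbeddingHom_apply_eq_self {a : α} (h : ∀ i, e i = a → s i = i) :
    viaEmbeddingHom e s a = a := by
  rw [viaEmbeddingHom_apply]
  by_cases ha : a ∈ Set.range e
  · obtain ⟨i, rfl⟩ := ha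
    rw [viaEmbedding_apply, h i rfl]
  · exact viaEmbedding_apply_of_notMem s e a ha

theorem conj_viaEmbeddingHom (h : ∀ i, s i ≠ i → x (e i) = e (c i)) :
    x * viaEmbeddingHom e s * x⁻¹ = viaEmbeddingHom e (c * s * c⁻¹) := by
  rw [mul_inv_eq_iff_eq_mul]
  ext a
  rw [Perm.mul_apply, Perm.mul_apply]
  by_cases ha : ∃ i, s i ≠ i ∧ e i = a
  · obtain ⟨i, hi, rfl⟩ := ha
    have hsi : s (s i) ≠ s i := s.injective.ne hi
    simp [viaEmbeddingHom_apply, viaEmbedding_apply, h i hi, h _ hsi]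
  · have hfix : ∀ i, e i = a → s i = i := fun i hi ↦ of_not_not fun hsi ↦ ha ⟨i, hsi, hi⟩
    have hfix_conj : ∀ j, e j = x a → (c * s * c⁻¹) j = j := by
      intro j hj
      obtain ⟨i, rfl⟩ := c.surjective j
      have hsi : s i = i := by
        by_contra hsi
        exact hsi (hfix i (x.injective ((h i hsi).trans hj)))
      simp [hsi]
    rw [viaEmbeddingHom_apply_eq_self hfix, viaEmbeddingHom_apply_eq_self hfix_conj]

theorem mul_viaEmbeddingHom_commutatorElement (h : ∀ i, s (c i) ≠ c i → x (e i) = e (c i)) :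
    x * viaEmbeddingHom e ⁅c⁻¹, s⁆ = viaEmbeddingHom e s * x * (viaEmbeddingHom e s)⁻¹ := by
  have hconj : x * viaEmbeddingHom e (c⁻¹ * s * c) * x⁻¹ = viaEmbeddingHom e s := by
    rw [conj_viaEmbeddingHom (c := c)]
    · congr 1
      group
    · exact fun i hi ↦ h i fun hs ↦ hi (by simp [Perm.mul_apply, hs])
  rw [commutatorElement_def, inv_inv, map_mul, map_inv, ← mul_assoc, mul_inv_eq_iff_eq_mul.mp hconj]

theorem isThreeCycle_viaEmbeddingHom [Fintype ι] [DecidableEq ι] [Fintype α] [DecidableEq α]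
    (e : ι ↪ α) (hs : s.IsThreeCycle) : (viaEmbeddingHom e s).IsThreeCycle := by
  let : DecidablePred (· ∈ Set.range e.1) := Classical.decPred _
  exact (cycleType_extendDomain _).trans hs

end ViaEmbedding

section Model

/-- The `(n-2)`-cycle `x` in the smallest case `n = 9`. -/
def modelCycle : Perm (Fin 9) := c[0, 1, 2, 3, 4, 5, 6]

/-- The permutation conjugating `x` to `y` for `n = 9`. It fixes `0 = modelCycle 6`, so the
commutator with `modelCycle⁻¹` does not depend on the image of `6`. -/
def modelSigma : Perm (Fin 9) := swap 1 7 * swap 3 8 * swap 4 6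

/-- The permutation conjugating `x ^ 2` to `x * y` for `n = 9`. It fixes `0` and `1`, the images of
`5` and `6` under `modelCycle ^ 2`. -/
def modelTau : Perm (Fin 9) := c[7, 6, 4, 3, 2] * swap 5 8

/-- The quotient `x⁻¹ * y` for `n = 9`, equal to `c[7, 1, 0] * c[8, 5, 3, 2] * swap 4 6`. -/
def modelCommutator : Perm (Fin 9) := ⁅modelCycle⁻¹, modelSigma⁆

theorem modelCommutator_eq_commutatorElement_sq :
    modelCommutator = ⁅(modelCycle ^ 2)⁻¹, modelTau⁆ := by
  decide +kernel

theorem isThreeCycle_modelCommutator_pow_four : (modelCommutator ^ 4).IsThreeCycle := by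
  rw [← card_support_eq_three_iff]
  decide +kernel

end Model

section Cycle

variable {α : Type*} [Fintype α] [DecidableEq α] {x : Perm α}

theorem exists_isCycle_card_support_eq {k : ℕ} (hk : 2 ≤ k) (hkα : k ≤ Fintype.card α) :
    ∃ x : Perm α, x.IsCycle ∧ x.support.card = k := by
  obtain ⟨x, hx⟩ := (exists_with_cycleType_iff α (m := {k})).mpr (by simpa using ⟨hkα, hk⟩)
  exact ⟨x, by rw [← card_cycleType_eq_one, hx, Multiset.card_singleton],
    by rw [← sum_cycleType, hx, Multiset.sum_singleton]⟩

theorem mem_alternatingGroup_iff_odd_card_support (hx : x.IsCycle) :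
    x ∈ alternatingGroup α ↔ Odd x.support.card := by
  rw [mem_alternatingGroup, hx.sign, neg_eq_iff_eq_neg,
    neg_one_pow_eq_neg_one_iff_odd (by decide)]

theorem exists_alternatingGroup_isCycle_card_support_eq {k : ℕ} (hk : 2 ≤ k)
    (hkα : k ≤ Fintype.card α) (hodd : Odd k) :
    ∃ x : alternatingGroup α, (x : Perm α).IsCycle ∧ (x : Perm α).support.card = k := by
  obtain ⟨x, hx, rfl⟩ := exists_isCycle_card_support_eq hk hkα
  exact ⟨⟨x, (mem_alternatingGroup_iff_odd_card_support hx).mpr hodd⟩, hx, rfl⟩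

theorem isCycle_sq_and_support_sq (hx : x.IsCycle) (hodd : Odd x.support.card) :
    (x ^ 2).IsCycle ∧ (x ^ 2).support = x.support := by
  have hcoprime : Nat.Coprime 2 (orderOf x) := by rwa [hx.orderOf, Nat.coprime_two_left]
  exact ⟨hx.pow_iff.mpr hcoprime, support_pow_coprime hcoprime⟩

theorem injOn_pow_apply (hx : x.IsCycle) {p : α} (hp : x p ≠ p) :
    (Set.Iio x.support.card).InjOn fun k ↦ (x ^ k) p := by
  intro i hi j hj hij
  rw [← hx.orderOf] at hi hj
  exact pow_injOn_Iio_orderOf hi hj (hx.pow_eq_pow_iff.mpr ⟨p, hp, hij⟩)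

end Cycle

/-- A copy of `Fin 9` in `α` on which `x` acts like `modelCycle`, containing the fixed points of
`x`. The value `x (e 6)` is left free, so that the cycle may leave the copy after `e 6`. -/
structure IsFrame {α : Type*} (x : Perm α) (e : Fin 9 ↪ α) : Prop where
  apply_eq : ∀ i, i ≠ 6 → x (e i) = e (modelCycle i)
  eq_or_eq_of_apply_eq_self : ∀ a, x a = a → a = e 7 ∨ a = e 8

theorem exists_isFrame {α : Type*} [Fintype α] [DecidableEq α] {x : Perm α} (hx : x.IsCycle)
    (hcard : x.support.card + 2 = Fintype.card α) (hα : 9 ≤ Fintype.card α) :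
    ∃ e, IsFrame x e := by
  have hcompl : x.supportᶜ.card = 2 := by
    rw [Finset.card_compl]
    omega
  obtain ⟨a, b, hab, hsupp⟩ := Finset.card_eq_two.mp hcompl
  have hfix : ∀ q, x q = q ↔ q = a ∨ q = b := fun q ↦ by
    rw [← notMem_support, ← Finset.mem_compl, hsupp, Finset.mem_insert, Finset.mem_singleton]
  have ha : x a = a := (hfix a).mpr (.inl rfl)
  have hb : x b = b := (hfix b).mpr (.inr rfl)
  obtain ⟨p, hp, -⟩ := id hx
  have hinj : Function.Injective fun k : Fin 7 ↦ (x ^ (k : ℕ)) p := fun i j hij ↦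
    Fin.ext (injOn_pow_apply hx hp (by rw [Set.mem_Iio]; omega) (by rw [Set.mem_Iio]; omega) hij)
  have hmoved : ∀ (k : ℕ) (q : α), x q = q → (x ^ k) p ≠ q := by
    rintro k _ hq rfl
    rw [← Perm.mul_apply, ← pow_succ', pow_succ, Perm.mul_apply] at hq
    exact hp ((x ^ k).injective hq)
  let e : Fin (7 + 2) → α := Fin.append (fun k : Fin 7 ↦ (x ^ (k : ℕ)) p) ![a, b]
  have he : Function.Injective e := by
    refine Fin.append_injective_iff.mpr ⟨hinj, by simp [Function.Injective, hab, hab.symm], ?_⟩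
    intro k i
    fin_cases i
    exacts [hmoved k a ha, hmoved k b hb]
  refine ⟨⟨e, he⟩, fun i hi ↦ ?_, fun q ↦ (hfix q).mp⟩
  fin_cases i
  all_goals first | rfl | assumption | exact absurd rfl hi

namespace IsFrame

variable {α : Type*} {x : Perm α} {e : Fin 9 ↪ α}

theorem mul_commutator (he : IsFrame x e) :
    x * viaEmbeddingHom e modelCommutator =
      viaEmbeddingHom e modelSigma * x * (viaEmbeddingHom e modelSigma)⁻¹ := by
  refine mul_viaEmbeddingHom_commutatorElement fun i hi ↦ he.apply_eq i ?_
  rintro rfl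
  exact hi (by decide +kernel)

theorem sq_mul_commutator (he : IsFrame x e) :
    x ^ 2 * viaEmbeddingHom e modelCommutator =
      viaEmbeddingHom e modelTau * x ^ 2 * (viaEmbeddingHom e modelTau)⁻¹ := by
  rw [modelCommutator_eq_commutatorElement_sq]
  refine mul_viaEmbeddingHom_commutatorElement fun i hi ↦ ?_
  obtain ⟨hi₁, hi₂⟩ : i ≠ 6 ∧ modelCycle i ≠ 6 := by
    revert i
    decide +kernel
  rw [sq, Perm.mul_apply, he.apply_eq i hi₁, he.apply_eq _ hi₂, sq, Perm.mul_apply]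

theorem mul_commutator_apply (he : IsFrame x e) {i : Fin 9} (hi : modelCommutator i ≠ 6) :
    (x * viaEmbeddingHom e modelCommutator) (e i) = e (modelCycle (modelCommutator i)) := by
  rw [Perm.mul_apply, viaEmbeddingHom_apply, viaEmbedding_apply, he.apply_eq _ hi]

theorem isPretransitive (he : IsFrame x e) (hx : x.IsCycle) {G : Subgroup (Perm α)}
    (hxG : x ∈ G) (htG : viaEmbeddingHom e modelCommutator ∈ G) : IsPretransitive G α := by
  set y := x * viaEmbeddingHom e modelCommutator with hy
  have hy_cycle : y.IsCycle := by
    rw [hy, he.mul_commutator]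
    exact hx.conj
  have hy_moves : ∀ i, modelCommutator i ≠ 6 → modelCycle (modelCommutator i) ≠ i →
      y (e i) ≠ e i := by
    intro i hi hne
    rw [hy, he.mul_commutator_apply hi]
    exact e.injective.ne hne
  refine isPretransitive_of_isCycle_of_isCycle hx hy_cycle hxG (mul_mem hxG htG)
    (fun a ↦ or_iff_not_imp_left.mpr fun ha ↦ ?_) ⟨e 2, ?_, ?_⟩
  · rcases he.eq_or_eq_of_apply_eq_self a (not_not.mp ha) with rfl | rfl
    · exact hy_moves 7 (by decide +kernel) (by decide +kernel)
    · exact hy_moves 8 (by decide +kernel) (by decide +kernel)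
  · rw [he.apply_eq 2 (by decide)]
    exact e.injective.ne (by decide)
  · exact hy_moves 2 (by decide +kernel) (by decide +kernel)

theorem alternatingGroup_le [Fintype α] [DecidableEq α] (he : IsFrame x e) (hx : x.IsCycle)
    (hcard : x.support.card + 2 = Fintype.card α) (hodd : Odd (Fintype.card α))
    {G : Subgroup (Perm α)} (hxG : x ∈ G) (htG : viaEmbeddingHom e modelCommutator ∈ G) :
    alternatingGroup α ≤ G := by
  have htrans : IsPretransitive G α := he.isPretransitive hx hxG htG
  have hminFac : 2 < (Fintype.card α).minFac := by
    have hne_one := Nat.minFac_eq_one_iff.not.mpr (by omega : Fintype.card α ≠ 1)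
    have hne_two := (Nat.minFac_eq_two_iff _).not.mpr hodd.not_two_dvd_nat
    have hpos := (Fintype.card α).minFac_pos
    omega
  have hprim : IsPreprimitive G α :=
    isPreprimitive_of_isCycle_of_card_lt hx hxG (by omega) (by omega)
  refine alternatingGroup_le_of_isPreprimitive_of_isThreeCycle_mem hprim
    (isThreeCycle_viaEmbeddingHom e isThreeCycle_modelCommutator_pow_four) ?_
  rw [map_pow]
  exact pow_mem htG 4

end IsFrame

theorem closure_eq_top_of_le_closure_image {G : Type*} [Group G] {H : Subgroup G} {s : Set H}
    (h : H ≤ Subgroup.closure (Subtype.val '' s)) : Subgroup.closure s = ⊤ := by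
  apply Subgroup.map_injective H.subtype_injective
  rw [MonoidHom.map_closure, ← MonoidHom.range_eq_map, Subgroup.range_subtype]
  refine le_antisymm ((Subgroup.closure_le H).mpr ?_) h
  rintro _ ⟨g, -, rfl⟩
  exact g.2

theorem stmt_4_general {α : Type*} [Fintype α] [DecidableEq α] (hα : 9 ≤ Fintype.card α)
    (x : alternatingGroup α) (hx : (x : Perm α).IsCycle)
    (hx_card : (x : Perm α).support.card = Fintype.card α - 2) :
    ∃ y z : alternatingGroup α,
      (y : Perm α).IsCycle ∧ (y : Perm α).support.card = Fintype.card α - 2 ∧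
      (z : Perm α).IsCycle ∧ (z : Perm α).support.card = Fintype.card α - 2 ∧
      x * y * z = 1 ∧ Subgroup.closure {x, y} = (⊤ : Subgroup (alternatingGroup α)) := by
  have hcard : (x : Perm α).support.card + 2 = Fintype.card α := by omega
  have hodd : Odd (x : Perm α).support.card :=
    (mem_alternatingGroup_iff_odd_card_support hx).mp x.2
  obtain ⟨hsq, hsq_support⟩ := isCycle_sq_and_support_sq hx hodd
  obtain ⟨e, he⟩ := exists_isFrame hx hcard hα
  let y : alternatingGroup α := ⟨x * viaEmbeddingHom e modelCommutator, by
    rw [he.mul_commutator]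
    exact alternatingGroup.normal.conj_mem _ x.2 _⟩
  have hy : (y : Perm α) = _ := he.mul_commutator
  have hxy : ((x * y : alternatingGroup α) : Perm α) =
      viaEmbeddingHom e modelTau * x ^ 2 * (viaEmbeddingHom e modelTau)⁻¹ := by
    rw [Subgroup.coe_mul, ← mul_assoc, ← sq, he.sq_mul_commutator]
  refine ⟨y, (x * y)⁻¹, ?_, ?_, ?_, ?_, mul_inv_cancel _, closure_eq_top_of_le_closure_image ?_⟩
  · exact hy ▸ hx.conj
  · rw [hy, card_support_conj, hx_card]
  · exact (hxy ▸ hsq.conj).inv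
  · rw [InvMemClass.coe_inv, support_inv, hxy, card_support_conj, hsq_support, hx_card]
  · rw [Set.image_pair]
    have hxG : (x : Perm α) ∈ Subgroup.closure {(x : Perm α), (y : Perm α)} :=
      Subgroup.subset_closure (Set.mem_insert _ _)
    have hyG : (y : Perm α) ∈ Subgroup.closure {(x : Perm α), (y : Perm α)} :=
      Subgroup.subset_closure (Set.mem_insert_of_mem _ rfl)
    exact he.alternatingGroup_le hx hcard (hcard ▸ hodd.add_even even_two) hxG
      ((mul_mem_cancel_left hxG).mp hyG)

/-- For odd `n ≥ 11` there exist three `(n-2)`-cycles in `A_n` with product `1`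
which generate `A_n`. -/
theorem stmt_4 (n : ℕ) (hn : 11 ≤ n) (hodd : Odd n) :
    ∃ x y z : alternatingGroup (Fin n),
      (x : Equiv.Perm (Fin n)).IsCycle ∧ (x : Equiv.Perm (Fin n)).support.card = n - 2 ∧
      (y : Equiv.Perm (Fin n)).IsCycle ∧ (y : Equiv.Perm (Fin n)).support.card = n - 2 ∧
      (z : Equiv.Perm (Fin n)).IsCycle ∧ (z : Equiv.Perm (Fin n)).support.card = n - 2 ∧
      x * y * z = 1 ∧ Subgroup.closure {x, y} = (⊤ : Subgroup (alternatingGroup (Fin n))) := by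
  obtain ⟨x, hx, hx_card⟩ := exists_alternatingGroup_isCycle_card_support_eq (α := Fin n)
    (by omega) (by simp) (Nat.Odd.sub_even (by omega : 2 ≤ n) hodd even_two)
  obtain ⟨y, z, h⟩ := stmt_4_general (by simp; omega) x hx (by simpa using hx_card)
  exact ⟨x, y, z, hx, hx_card, by simpa using h⟩
end

section
/- Let q > 7 be a power of 2, G = L_2(q) = PSL_2(q) = SL_2(q), and let x ∈ G have order q−1. Let k be an algebraically closed field of characteristic 2 and V a nontrivial irreducible kG-module of dimension greater than 2. Then every eigenspace of x on V has dimension at most (1/3)·dim V. -/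
/-!
An element of order `q - 1` is conjugate to a generator `h` of the diagonal torus of
`SL(2, F)`. For any `θ`, the range of `h - θ` has codimension equal to the dimension of the
`θ`-eigenspace, so it is enough to exhibit few vectors which together with this range span `V`.

Let `v` be a highest weight vector of weight `χ` and `y = w v` its image under the Weyl element. By
the Bruhat decomposition `v` and the translates `u t y` under the root subgroup span `V`. In
characteristic two every `t ≠ 0` is a square, so modulo the range of `h - θ` all `u t y` with
`t ≠ 0` are multiples of `u 1 y`, and `v`, `y`, `u 1 y` suffice. The sum `N = ∑ t, u t y` then
separates two cases.

* If `N = 0`, this relation and its image under `w` express `y` and `v` through the `u t y` with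
  `t ≠ 0`, so eigenspaces have dimension at most `1`, while `dim V ≥ 3`.
* If `N ≠ 0`, the translates `u t y` are linearly independent because the root subgroup is a
  `2`-group, so `dim V ≥ q ≥ 8`, and it remains to get rid of one of the three vectors. As `v` and
  `y` have weights `χ h` and `χ h⁻¹`, one of them lies in the range of `h - θ` unless both weights
  equal `θ`. In that case `χ = 1` and `v + N` is fixed by `SL(2, F)`, hence `v = -N`.
-/

section LinearAlgebra

variable {k V : Type*} [Field k] [AddCommGroup V] [Module k V] {f : Module.End k V}

theorem finrank_eigenspace_le_card [FiniteDimensional k V] {θ : k} {s : Finset V}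
    (hs : ∀ W : Submodule k V, LinearMap.range (f - θ • 1) ≤ W → (∀ v ∈ s, v ∈ W) → W = ⊤) :
    Module.finrank k (f.eigenspace θ) ≤ s.card := by
  have htop : Submodule.span k (s : Set V) ⊔ LinearMap.range (f - θ • 1) = ⊤ :=
    hs _ le_sup_right fun v hv ↦ Submodule.mem_sup_left (Submodule.subset_span hv)
  have hsup := Submodule.finrank_add_le_finrank_add_finrank (Submodule.span k (s : Set V))
    (LinearMap.range (f - θ • 1))
  have hspan : Module.finrank k (Submodule.span k (s : Set V)) ≤ s.card :=
    finrank_span_finset_le_card s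
  have hrank := LinearMap.finrank_range_add_finrank_ker (f - θ • 1)
  rw [htop, finrank_top] at hsup
  rw [Module.End.eigenspace_def]
  lia

theorem mem_range_sub_smul_one {θ c : k} {v : V} (hv : f v = c • v) (hc : c ≠ θ) :
    v ∈ LinearMap.range (f - θ • 1) :=
  ⟨(c - θ)⁻¹ • v, by simp [hv, ← sub_smul, smul_smul, inv_mul_cancel₀ (sub_ne_zero.2 hc)]⟩

theorem apply_mem_of_range_sub_smul_one_le {θ : k} {W : Submodule k V}
    (hW : LinearMap.range (f - θ • 1) ≤ W) {v : V} (hv : v ∈ W) : f v ∈ W := by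
  simpa using W.add_mem (hW ⟨v, rfl⟩) (W.smul_mem θ hv)

end LinearAlgebra

section FiniteField

open Polynomial

theorem splits_X_pow_card_sub_X (F : Type*) [Field F] [Fintype F] :
    (X ^ Fintype.card F - X : F[X]).Splits := by
  rw [splits_iff_card_roots, FiniteField.roots_X_pow_card_sub_X,
    FiniteField.X_pow_card_sub_X_natDegree_eq F Fintype.one_lt_card]
  rfl

theorem exists_hasEigenvalue_of_pow_card_eq {F V : Type*} [Field F] [Fintype F] [AddCommGroup V]
    [Module F V] [FiniteDimensional F V] [Nontrivial V] {f : Module.End F V}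
    (hf : f ^ Fintype.card F = f) : ∃ c, f.HasEigenvalue c := by
  have hdvd : minpoly F f ∣ X ^ Fintype.card F - X := minpoly.dvd _ _ (by simp [hf])
  have hsplits : (minpoly F f).Splits := (splits_X_pow_card_sub_X F).of_dvd
    (FiniteField.X_pow_card_sub_X_ne_zero F Fintype.one_lt_card) hdvd
  obtain ⟨c, hc⟩ := hsplits.exists_eval_eq_zero
    (minpoly.degree_pos (Algebra.IsIntegral.isIntegral f)).ne'
  exact ⟨c, Module.End.hasEigenvalue_of_isRoot hc⟩

end FiniteField

section PGroup

/-- The left regular representation of `G`, realised on functions so that the coefficients of a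
linear relation between translates of a vector are its elements. -/
def leftTranslation (k G : Type*) [CommSemiring k] [Group G] : Representation k G (G → k) where
  toFun g := LinearMap.funLeft k k (g⁻¹ * ·)
  map_one' := by ext; simp
  map_mul' g h := by ext; simp [mul_assoc, LinearMap.funLeft]

@[simp]
theorem leftTranslation_apply {k G : Type*} [CommSemiring k] [Group G] (g t : G) (f : G → k) :
    leftTranslation k G g f t = f (g⁻¹ * t) :=
  rfl

variable {k G V : Type*} [Field k] [Group G] [AddCommGroup V] [Module k V] {p : ℕ} [Fact p.Prime]
  [CharP k p] {ρ : Representation k G V}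

/-- Fixed points are counted on the `ZMod p`-span of an orbit, which is finite whatever `k` is. -/
theorem exists_mem_invariants_ne_zero [Finite G] [Nontrivial V] (hG : IsPGroup p G) :
    ∃ v ∈ ρ.invariants, v ≠ 0 := by
  obtain ⟨v, hv⟩ := exists_ne (0 : V)
  have : Module (ZMod p) V := AddCommGroup.zmodModule fun w ↦ by
    rw [← Nat.cast_smul_eq_nsmul k, CharP.cast_eq_zero, zero_smul]
  let A := Submodule.span (ZMod p) (Set.range fun g ↦ ρ g v)
  have hA (g : G) {w : V} (hw : w ∈ A) : ρ g w ∈ A := by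
    have hle : A ≤ Submodule.comap (M₂ := V) ((ρ g).toAddMonoidHom.toZModLinearMap p) A := by
      rw [Submodule.span_le]
      rintro _ ⟨h, rfl⟩
      exact Submodule.subset_span ⟨g * h, by simp⟩
    exact hle hw
  let _ : MulAction G A :=
    { smul g w := ⟨ρ g w, hA g w.2⟩
      one_smul w := Subtype.ext (by change ρ 1 _ = _; simp)
      mul_smul g h w := Subtype.ext (by change ρ (g * h) _ = ρ g (ρ h _); simp) }
  have hsmul (g : G) (w : A) : ((g • w : A) : V) = ρ g w := rfl
  have : Module.Finite (ZMod p) A := .span_of_finite _ (Set.finite_range _)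
  have : Finite A := Module.finite_of_finite (ZMod p)
  have : Nontrivial A :=
    ⟨⟨v, Submodule.subset_span ⟨1, by simp⟩⟩, 0, fun h ↦ hv (congrArg Subtype.val h)⟩
  have hcard : p ∣ Nat.card A := by
    rw [Module.natCard_eq_pow_finrank (K := ZMod p), Nat.card_zmod]
    exact dvd_pow_self p Module.finrank_pos.ne'
  obtain ⟨w, hw, hw0⟩ := hG.exists_fixed_point_of_prime_dvd_card_of_fixed_point A hcard
    (a := 0) fun g ↦ Subtype.ext (by simp [hsmul])
  exact ⟨w, fun g ↦ congrArg Subtype.val (hw g), fun h ↦ hw0 (Subtype.ext h.symm)⟩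

/-- The linear relations between the translates form a subrepresentation of `leftTranslation k G`,
and a nonzero invariant relation, having constant coefficients, would force `ρ.norm v = 0`. -/
theorem linearIndependent_of_norm_apply_ne_zero [Fintype G] (hG : IsPGroup p G) {v : V}
    (hv : ρ.norm v ≠ 0) : LinearIndependent k fun g ↦ ρ g v := by
  let K : Subrepresentation (leftTranslation k G) :=
    { toSubmodule := LinearMap.ker (Fintype.linearCombination k fun g ↦ ρ g v)
      apply_mem_toSubmodule s f hf := by
        have hshift : ∑ t, f (s⁻¹ * t) • ρ t v = ρ s (∑ t, f t • ρ t v) := by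
          rw [map_sum, ← Equiv.sum_comp (Equiv.mulLeft s)]
          simp
        simp_all [Fintype.linearCombination_apply] }
  rw [linearIndependent_iff_injective_fintypeLinearCombination, ← LinearMap.ker_eq_bot,
    ← not_ne_iff, ← Submodule.nontrivial_iff_ne_bot]
  intro hK
  have : Nontrivial K.toSubmodule := hK
  obtain ⟨f, hf, hf0⟩ := exists_mem_invariants_ne_zero (ρ := K.toRepresentation) hG
  have hconst (t : G) : f.1 t = f.1 1 := by
    have ht : f.1 (t⁻¹ * t) = f.1 t := congrFun (congrArg Subtype.val (hf t)) t
    rw [← ht, inv_mul_cancel]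
  have hsum : f.1 1 • ρ.norm v = 0 := by
    have hf2 : ∑ t, f.1 t • ρ t v = 0 := f.2
    simpa only [hconst, ← Finset.smul_sum, Representation.norm, LinearMap.sum_apply] using hf2
  have h1 : f.1 1 = 0 := (smul_eq_zero.1 hsum).resolve_right hv
  exact hf0 (Subtype.ext (funext fun t ↦ (hconst t).trans h1))

end PGroup

section Irreducible

variable {k G V : Type*} [Field k] [Group G] [AddCommGroup V] [Module k V]
  {ρ : Representation k G V}

theorem isIrreducible_of_forall_eq_bot_or_eq_top [Nontrivial V]
    (h : ∀ W : Submodule k V, (∀ g, ∀ v ∈ W, ρ g v ∈ W) → W = ⊥ ∨ W = ⊤) : ρ.IsIrreducible where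
  exists_pair_ne := ⟨⊥, ⊤, fun hbt ↦ bot_ne_top (congrArg Subrepresentation.toSubmodule hbt)⟩
  eq_bot_or_eq_top W := (h W.toSubmodule W.apply_mem_toSubmodule).imp
    (Subrepresentation.toSubmodule_injective ·) (Subrepresentation.toSubmodule_injective ·)

theorem eq_top_of_forall_apply_mem [ρ.IsIrreducible] {W : Submodule k V} {v : V} (hv : v ≠ 0)
    (hW : ∀ g, ∀ v ∈ W, ρ g v ∈ W) (hvW : v ∈ W) : W = ⊤ := by
  rcases eq_bot_or_eq_top (⟨W, hW⟩ : Subrepresentation ρ) with h | h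
  · have : W = ⊥ := congrArg Subrepresentation.toSubmodule h
    simp_all
  · exact congrArg Subrepresentation.toSubmodule h

theorem isIrreducible_comp_of_surjective [ρ.IsIrreducible] {H : Type*} [Group H] {φ : H →* G}
    (hφ : Function.Surjective φ) : Representation.IsIrreducible (ρ.comp φ) :=
  have : Nontrivial V := not_subsingleton_iff_nontrivial.1 fun _ ↦
    bot_ne_top (α := Subrepresentation ρ)
      (Subrepresentation.toSubmodule_injective (Subsingleton.elim _ _))
  isIrreducible_of_forall_eq_bot_or_eq_top fun W hW ↦
    (eq_bot_or_eq_top (⟨W, fun g v hv ↦ by obtain ⟨h, rfl⟩ := hφ g; exact hW h v hv⟩ :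
      Subrepresentation ρ)).imp (congrArg Subrepresentation.toSubmodule)
      (congrArg Subrepresentation.toSubmodule)

theorem span_range_apply_eq_top [ρ.IsIrreducible] {v : V} (hv : v ≠ 0) :
    Submodule.span k (Set.range fun g ↦ ρ g v) = ⊤ := by
  refine eq_top_of_forall_apply_mem (ρ := ρ) hv (fun g ↦ ?_) (Submodule.subset_span ⟨1, by simp⟩)
  change Submodule.span k _ ≤ Submodule.comap (ρ g) (Submodule.span k _)
  rw [Submodule.span_le]
  rintro _ ⟨h, rfl⟩
  exact Submodule.subset_span ⟨g * h, by simp⟩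

theorem invariants_eq_bot_of_one_lt_finrank [ρ.IsIrreducible] (hV : 1 < Module.finrank k V) :
    ρ.invariants = ⊥ := by
  refine (Submodule.eq_bot_iff _).2 fun v hv ↦ by_contra fun hv0 ↦ hV.not_ge ?_
  have htop : Submodule.span k {v} = ⊤ := by
    simpa [(ρ.mem_invariants v).1 hv] using span_range_apply_eq_top (ρ := ρ) hv0
  exact finrank_le_one v fun w ↦ Submodule.mem_span_singleton.1 (htop ▸ Submodule.mem_top)

end Irreducible

section SpecialLinearGroup

open Matrix Matrix.SpecialLinearGroup
open scoped MatrixGroups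

section CommRing

variable {R : Type*} [CommRing R]

/-- The root subgroup `t ↦ !![1, t; 0, 1]` of `SL(2, R)`. -/
def upperUnipotent : AddChar R SL(2, R) where
  toFun t := ⟨!![1, t; 0, 1], by simp⟩
  map_zero_eq_one' := Subtype.ext (by simp [one_fin_two])
  map_add_eq_mul' s t := Subtype.ext <|
    show !![1, s + t; 0, 1] = !![1, s; 0, 1] * !![1, t; 0, 1] by simp [add_comm]

/-- The diagonal torus `s ↦ !![s, 0; 0, s⁻¹]` of `SL(2, R)`. -/
def diagonalTorus : Rˣ →* SL(2, R) where
  toFun s := ⟨!![(s : R), 0; 0, (s⁻¹ : Rˣ)], by simp⟩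
  map_one' := Subtype.ext (by simp [one_fin_two])
  map_mul' s t := Subtype.ext <|
    show !![((s * t : Rˣ) : R), 0; 0, ((s * t)⁻¹ : Rˣ)] =
      !![(s : R), 0; 0, (s⁻¹ : Rˣ)] * !![(t : R), 0; 0, (t⁻¹ : Rˣ)] by simp [mul_comm]

variable (R) in
/-- A representative in `SL(2, R)` of the nontrivial Weyl group element for `diagonalTorus`. -/
def weylElement : SL(2, R) :=
  ⟨!![0, -1; 1, 0], by simp⟩

theorem coe_upperUnipotent (t : R) : (upperUnipotent t : Matrix _ _ R) = !![1, t; 0, 1] :=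
  rfl

theorem coe_diagonalTorus (s : Rˣ) :
    (diagonalTorus s : Matrix _ _ R) = !![(s : R), 0; 0, (s⁻¹ : Rˣ)] :=
  rfl

theorem coe_weylElement : (weylElement R : Matrix _ _ R) = !![0, -1; 1, 0] :=
  rfl

theorem upperUnipotent_injective : Function.Injective (upperUnipotent : R → SL(2, R)) :=
  fun s t h ↦ by simpa [coe_upperUnipotent] using congr($h 0 1)

theorem diagonalTorus_injective : Function.Injective (diagonalTorus : Rˣ → SL(2, R)) :=
  fun s t h ↦ Units.ext (by simpa [coe_diagonalTorus] using congr($h 0 0))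

theorem diagonalTorus_mul_upperUnipotent (s : Rˣ) (t : R) :
    diagonalTorus s * upperUnipotent t = upperUnipotent (s ^ 2 * t) * diagonalTorus s := by
  apply Subtype.ext
  simp [coe_diagonalTorus, coe_upperUnipotent, sq, mul_right_comm]

theorem diagonalTorus_mul_weylElement (s : Rˣ) :
    diagonalTorus s * weylElement R = weylElement R * diagonalTorus s⁻¹ := by
  apply Subtype.ext
  simp [coe_diagonalTorus, coe_weylElement]

theorem weylElement_mul_weylElement : weylElement R * weylElement R = diagonalTorus (-1) := by
  apply Subtype.ext
  simp [coe_diagonalTorus, coe_weylElement]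

theorem weylElement_mul_upperUnipotent_mul_weylElement (t : Rˣ) :
    weylElement R * upperUnipotent (t : R) * weylElement R =
      upperUnipotent (-(t⁻¹ : Rˣ) : R) * weylElement R * diagonalTorus t *
        upperUnipotent (-(t⁻¹ : Rˣ) : R) := by
  apply Subtype.ext
  simp [coe_diagonalTorus, coe_weylElement, coe_upperUnipotent]

end CommRing

section Field

variable {K : Type*} [Field K]

theorem exists_eq_diagonalTorus_mul_upperUnipotent {g : SL(2, K)} (hg : g 1 0 = 0) :
    ∃ s t, g = diagonalTorus s * upperUnipotent t := by
  obtain ⟨a, b, ha, rfl⟩ := g.fin_two_exists_eq_mk_of_apply_zero_one_eq_zero hg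
  refine ⟨Units.mk0 a ha, a⁻¹ * b, Subtype.ext ?_⟩
  simp [coe_diagonalTorus, coe_upperUnipotent, ha]

theorem bruhat_decomposition (g : SL(2, K)) :
    (∃ s t, g = diagonalTorus s * upperUnipotent t) ∨
      ∃ r s t, g = upperUnipotent r * weylElement K * diagonalTorus s * upperUnipotent t := by
  by_cases hg : g 1 0 = 0
  · exact .inl (exists_eq_diagonalTorus_mul_upperUnipotent hg)
  · refine .inr ⟨g 0 0 / g 1 0, Units.mk0 _ hg, g 1 1 / g 1 0, Subtype.ext ?_⟩
    have hdet : g 0 0 * g 1 1 - g 0 1 * g 1 0 = 1 := by rw [← det_fin_two, det_coe]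
    refine (eta_fin_two (g : Matrix _ _ K)).trans ?_
    have hg01 : g 0 1 = g 0 0 * (g 1 1 / g 1 0) - (g 1 0)⁻¹ := by
      field_simp
      linear_combination -hdet
    simp [coe_diagonalTorus, coe_upperUnipotent, coe_weylElement, hg, hg01, mul_div_cancel₀,
      sub_eq_add_neg]

theorem exists_conj_apply_one_zero_eq_zero {x : SL(2, K)} {c : K}
    (hc : Module.End.HasEigenvalue (Matrix.toLin' (x : Matrix (Fin 2) (Fin 2) K)) c) :
    ∃ P : SL(2, K), (P⁻¹ * x * P) 1 0 = 0 := by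
  obtain ⟨v, hv⟩ := hc.exists_hasEigenvector
  have hxv : (x : Matrix _ _ K) *ᵥ v = c • v := by simpa using hv.apply_eq_smul
  have hcop : IsCoprime (v 0) (v 1) := by
    rw [Semifield.isCoprime_iff, ← not_and_or]
    exact fun h ↦ hv.2 (by ext i; fin_cases i <;> simp [h])
  obtain ⟨P, hP0, hP1⟩ := hcop.exists_SL2_col 0
  refine ⟨P, ?_⟩
  have h0 : x 0 0 * P 0 0 + x 0 1 * P 1 0 = c * P 0 0 := by
    simpa [mulVec, dotProduct, Fin.sum_univ_two, hP0, hP1] using congrFun hxv 0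
  have h1 : x 1 0 * P 0 0 + x 1 1 * P 1 0 = c * P 1 0 := by
    simpa [mulVec, dotProduct, Fin.sum_univ_two, hP0, hP1] using congrFun hxv 1
  have hentry : (P⁻¹ * x * P) 1 0 =
      P 0 0 * (x 1 0 * P 0 0 + x 1 1 * P 1 0) - P 1 0 * (x 0 0 * P 0 0 + x 0 1 * P 1 0) := by
    simp [mul_apply, Fin.sum_univ_two, adjugate_fin_two, vecMul, dotProduct]
    ring
  rw [hentry, h0, h1]
  ring

theorem exists_diagonalTorus_mul_upperUnipotent_eq_conj {a : Kˣ} (ha : a ^ 2 ≠ 1) (t : K) :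
    ∃ P : SL(2, K), diagonalTorus a * upperUnipotent t = MulAut.conj P (diagonalTorus a) := by
  have ha' : 1 - (a : K) ^ 2 ≠ 0 := fun h ↦ ha (Units.ext (by push_cast; linear_combination -h))
  refine ⟨upperUnipotent (a ^ 2 * t / (1 - a ^ 2)), ?_⟩
  rw [MulAut.conj_apply, eq_mul_inv_iff_mul_eq, mul_assoc, ← AddChar.map_add_eq_mul,
    diagonalTorus_mul_upperUnipotent]
  congr 2
  field_simp
  ring

theorem eq_zero_of_diagonalTorus_mul_upperUnipotent_pow_eq_one [Fintype K] {a : Kˣ} (ha : a ^ 2 = 1)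
    {t : K} (h : (diagonalTorus a * upperUnipotent t) ^ (Fintype.card K - 1) = 1) : t = 0 := by
  have ha' : (a : K) ^ 2 = 1 := by rw [← Units.val_pow_eq_pow_val, ha, Units.val_one]
  have hcomm : Commute (diagonalTorus a) (upperUnipotent t) := by
    rw [commute_iff_eq, diagonalTorus_mul_upperUnipotent, ha', one_mul]
  have hcard : ((Fintype.card K - 1 : ℕ) : K) = -1 := by
    rw [Nat.cast_sub Fintype.card_pos, FiniteField.cast_card_eq_zero]
    simp
  have ha1 : a ^ (Fintype.card K - 1) = 1 := by
    ext
    simpa using FiniteField.pow_card_sub_one_eq_one (a : K) a.ne_zero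
  rw [hcomm.mul_pow, ← map_pow, ← AddChar.map_nsmul_eq_pow, ha1, map_one, one_mul, nsmul_eq_mul,
    hcard, ← AddChar.map_zero_eq_one upperUnipotent] at h
  simpa using upperUnipotent_injective h

theorem exists_conj_diagonalTorus_eq [Fintype K] {x : SL(2, K)}
    (hx : x ^ (Fintype.card K - 1) = 1) : ∃ P a, MulAut.conj P (diagonalTorus a) = x := by
  have hpow : x ^ Fintype.card K = x := by
    rw [← Nat.sub_add_cancel (Fintype.card_pos (α := K)), pow_succ, hx, one_mul]
  obtain ⟨c, hc⟩ :=
    exists_hasEigenvalue_of_pow_card_eq (f := Matrix.toLin' (x : Matrix (Fin 2) (Fin 2) K))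
      (by rw [← Matrix.toLin'_pow, ← coe_pow, hpow])
  obtain ⟨P, hP⟩ := exists_conj_apply_one_zero_eq_zero hc
  obtain ⟨a, t, hat⟩ := exists_eq_diagonalTorus_mul_upperUnipotent hP
  have hx' : x = MulAut.conj P (diagonalTorus a * upperUnipotent t) := by
    rw [← hat]
    simp [mul_assoc]
  by_cases ha : a ^ 2 = 1
  · have ht : t = 0 := eq_zero_of_diagonalTorus_mul_upperUnipotent_pow_eq_one ha (by
      rw [← map_eq_one_iff (MulAut.conj P) (MulAut.conj P).injective, map_pow, ← hx', hx])
    exact ⟨P, a, by simpa [ht] using hx'.symm⟩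
  · obtain ⟨Q, hQ⟩ := exists_diagonalTorus_mul_upperUnipotent_eq_conj ha t
    exact ⟨P * Q, a, by rw [hx', hQ, map_mul, MulAut.mul_apply]⟩

end Field

end SpecialLinearGroup

section Cyclic

variable {k G V : Type*} [Field k] [IsAlgClosed k] [Group G] [IsCyclic G] [Finite G]
  [AddCommGroup V] [Module k V] [FiniteDimensional k V] [Nontrivial V]

theorem exists_forall_apply_eq_smul (ρ : Representation k G V) :
    ∃ (χ : G →* k) (v : V), v ≠ 0 ∧ ∀ g, ρ g v = χ g • v := by
  obtain ⟨g, hg⟩ := IsCyclic.exists_monoid_generator (α := G)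
  obtain ⟨c, hc⟩ := Module.End.exists_eigenvalue (ρ g)
  obtain ⟨v, hv⟩ := hc.exists_hasEigenvector
  have hscalar (h : G) : ∃ a : k, ρ h v = a • v := by
    obtain ⟨n, rfl⟩ := Submonoid.mem_powers_iff _ _ |>.1 (hg h)
    exact ⟨c ^ n, by rw [map_pow, hv.pow_apply]⟩
  choose χ hχ using hscalar
  have hinj := smul_left_injective k hv.2
  refine ⟨⟨⟨χ, hinj ?_⟩, fun s t ↦ hinj ?_⟩, v, hv.2, hχ⟩
  · change χ 1 • v = (1 : k) • v
    rw [← hχ, map_one, Module.End.one_apply, one_smul]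
  · change χ (s * t) • v = (χ s * χ t) • v
    rw [← hχ, map_mul, Module.End.mul_apply, hχ t, map_smul, hχ s, smul_smul, mul_comm]

end Cyclic

section HighestWeight

open scoped MatrixGroups

variable {F k V : Type*} [Field F] [Field k] [AddCommGroup V] [Module k V]
  {ρ : Representation k SL(2, F) V} {χ : Fˣ →* k} {v : V}

/-- `v` is a highest weight vector of weight `χ` for the Borel subgroup of upper triangular
matrices: a nonzero vector fixed by `upperUnipotent` on which `diagonalTorus` acts through `χ`. -/
structure IsHighestWeightVector (ρ : Representation k SL(2, F) V) (χ : Fˣ →* k) (v : V) :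
    Prop where
  ne_zero : v ≠ 0
  unipotent_apply (t : F) : ρ (upperUnipotent t) v = v
  torus_apply (s : Fˣ) : ρ (diagonalTorus s) v = χ s • v

theorem sum_eq_zero_add_sum_units {M : Type*} [AddCommMonoid M] [Fintype F] [DecidableEq F]
    (f : F → M) : ∑ t, f t = f 0 + ∑ s : Fˣ, f s := by
  rw [Fintype.sum_eq_add_sum_subtype_ne f 0]
  congr 1
  exact (Fintype.sum_equiv unitsEquivNeZero _ _ fun _ ↦ rfl).symm

theorem mem_of_sum_upperUnipotent_mem [Fintype F] {W : Submodule k V} {y : V}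
    (hsum : ∑ t, ρ (upperUnipotent t) y ∈ W) (hW : ∀ s : Fˣ, ρ (upperUnipotent (s : F)) y ∈ W) :
    y ∈ W := by
  classical
  rw [sum_eq_zero_add_sum_units, W.add_mem_iff_left (W.sum_mem fun s _ ↦ hW s)] at hsum
  simpa using hsum

namespace IsHighestWeightVector

theorem torus_weyl (hv : IsHighestWeightVector ρ χ v) (s : Fˣ) :
    ρ (diagonalTorus s) (ρ (weylElement F) v) = χ s⁻¹ • ρ (weylElement F) v := by
  rw [← Module.End.mul_apply, ← map_mul, diagonalTorus_mul_weylElement, map_mul,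
    Module.End.mul_apply, hv.torus_apply, map_smul]

theorem torus_unipotent_weyl (hv : IsHighestWeightVector ρ χ v) (s : Fˣ) (t : F) :
    ρ (diagonalTorus s) (ρ (upperUnipotent t) (ρ (weylElement F) v)) =
      χ s⁻¹ • ρ (upperUnipotent (s ^ 2 * t)) (ρ (weylElement F) v) := by
  rw [← Module.End.mul_apply, ← map_mul, diagonalTorus_mul_upperUnipotent, map_mul,
    Module.End.mul_apply, hv.torus_weyl, map_smul]

theorem weyl_weyl (hv : IsHighestWeightVector ρ χ v) :
    ρ (weylElement F) (ρ (weylElement F) v) = χ (-1) • v := by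
  rw [← Module.End.mul_apply, ← map_mul, weylElement_mul_weylElement, hv.torus_apply]

theorem weyl_unipotent_weyl (hv : IsHighestWeightVector ρ χ v) (t : Fˣ) :
    ρ (weylElement F) (ρ (upperUnipotent (t : F)) (ρ (weylElement F) v)) =
      χ t • ρ (upperUnipotent (-(t⁻¹ : Fˣ) : F)) (ρ (weylElement F) v) := by
  rw [← Module.End.mul_apply, ← Module.End.mul_apply, ← map_mul, ← map_mul,
    weylElement_mul_upperUnipotent_mul_weylElement]
  simp only [map_mul, Module.End.mul_apply, hv.unipotent_apply, hv.torus_apply, map_smul]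

theorem eq_top_of_mem [ρ.IsIrreducible] (hv : IsHighestWeightVector ρ χ v) {W : Submodule k V}
    (hvW : v ∈ W) (hW : ∀ t, ρ (upperUnipotent t) (ρ (weylElement F) v) ∈ W) : W = ⊤ := by
  rw [eq_top_iff, ← span_range_apply_eq_top (ρ := ρ) hv.ne_zero, Submodule.span_le]
  rintro _ ⟨g, rfl⟩
  rcases bruhat_decomposition g with ⟨s, t, rfl⟩ | ⟨r, s, t, rfl⟩
  · simpa [hv.unipotent_apply, hv.torus_apply] using W.smul_mem (χ s) hvW
  · simpa [hv.unipotent_apply, hv.torus_apply] using W.smul_mem (χ s) (hW r)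

variable [Fintype F]

theorem weyl_sum_unipotent_weyl [DecidableEq F] (hv : IsHighestWeightVector ρ χ v) :
    ρ (weylElement F) (∑ t, ρ (upperUnipotent t) (ρ (weylElement F) v)) =
      χ (-1) • v +
        ∑ s : Fˣ, χ s • ρ (upperUnipotent (-(s⁻¹ : Fˣ) : F)) (ρ (weylElement F) v) := by
  simp [sum_eq_zero_add_sum_units, hv.weyl_weyl, hv.weyl_unipotent_weyl, -Units.val_inv_eq_inv_val]

theorem mem_of_sum_eq_zero (hv : IsHighestWeightVector ρ χ v) {W : Submodule k V}
    (hsum : ∑ t, ρ (upperUnipotent t) (ρ (weylElement F) v) = 0)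
    (hW : ∀ s : Fˣ, ρ (upperUnipotent (s : F)) (ρ (weylElement F) v) ∈ W) : v ∈ W := by
  classical
  have hzero := hv.weyl_sum_unipotent_weyl
  rw [hsum, map_zero, eq_comm, add_eq_zero_iff_eq_neg] at hzero
  have hχv : χ (-1) • v ∈ W := by
    rw [hzero]
    exact W.neg_mem (W.sum_mem fun s _ ↦ W.smul_mem _ (hW (-s⁻¹)))
  exact (W.smul_mem_iff ((Group.isUnit _).map χ).ne_zero).1 hχv

theorem add_sum_mem_invariants (hv : IsHighestWeightVector ρ 1 v) :
    v + ∑ t, ρ (upperUnipotent t) (ρ (weylElement F) v) ∈ ρ.invariants := by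
  classical
  set y := ρ (weylElement F) v with hy
  have hu (r : F) : ρ (upperUnipotent r) (v + ∑ t, ρ (upperUnipotent t) y) =
      v + ∑ t, ρ (upperUnipotent t) y := by
    rw [map_add, hv.unipotent_apply, map_sum]
    congr 1
    exact Fintype.sum_equiv (Equiv.addLeft r) _ _ fun t ↦ by simp [AddChar.map_add_eq_mul]
  have hh (s : Fˣ) : ρ (diagonalTorus s) (v + ∑ t, ρ (upperUnipotent t) y) =
      v + ∑ t, ρ (upperUnipotent t) y := by
    rw [map_add, hv.torus_apply, map_sum, MonoidHom.one_apply, one_smul]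
    congr 1
    exact Fintype.sum_equiv (Units.mulLeft (s ^ 2)) _ _ fun t ↦ by
      simp [hy, hv.torus_unipotent_weyl]
  have hw : ρ (weylElement F) (v + ∑ t, ρ (upperUnipotent t) y) =
      v + ∑ t, ρ (upperUnipotent t) y := by
    rw [map_add, hv.weyl_sum_unipotent_weyl,
      sum_eq_zero_add_sum_units fun t ↦ ρ (upperUnipotent t) y]
    have := Fintype.sum_equiv ((Equiv.inv Fˣ).trans (Equiv.neg Fˣ))
      (fun s : Fˣ ↦ ρ (upperUnipotent (-(s⁻¹ : Fˣ) : F)) y)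
      (fun s : Fˣ ↦ ρ (upperUnipotent (s : F)) y) fun s ↦ by simp
    simp [this, ← hy, add_left_comm, -Units.val_inv_eq_inv_val]
  intro g
  rcases bruhat_decomposition g with ⟨s, t, rfl⟩ | ⟨r, s, t, rfl⟩ <;>
    simp only [map_mul, Module.End.mul_apply, hu, hh, hw]

theorem eq_neg_sum_of_apply_eq_apply_inv [CharP k 2] [ρ.IsIrreducible]
    (hv : IsHighestWeightVector ρ χ v) (hV : 1 < Module.finrank k V) {a : Fˣ}
    (ha : ∀ b, b ∈ Submonoid.powers a) (hχ : χ a = χ a⁻¹) :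
    v = -∑ t, ρ (upperUnipotent t) (ρ (weylElement F) v) := by
  have hsq : χ a ^ 2 = 1 := by
    rw [sq]
    nth_rw 2 [hχ]
    rw [← map_mul, mul_inv_cancel, map_one]
  have ha1 : χ a = 1 := CharTwo.sq_injective (hsq.trans (one_pow 2).symm)
  have hχ1 : χ = 1 := MonoidHom.ext fun b ↦ by
    obtain ⟨n, rfl⟩ := Submonoid.mem_powers_iff _ _ |>.1 (ha b)
    rw [map_pow, ha1, one_pow, MonoidHom.one_apply]
  subst hχ1
  have hinv := hv.add_sum_mem_invariants
  rwa [invariants_eq_bot_of_one_lt_finrank hV, Submodule.mem_bot, add_eq_zero_iff_eq_neg] at hinv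

end IsHighestWeightVector

theorem card_le_finrank_of_sum_upperUnipotent_ne_zero (p : ℕ) [Fact p.Prime] [CharP F p]
    [CharP k p] [FiniteDimensional k V] [Fintype F] (h : ∑ t : F, ρ (upperUnipotent t) v ≠ 0) :
    Fintype.card F ≤ Module.finrank k V := by
  let _ := ZMod.algebra F p
  have hnorm : Representation.norm (ρ.comp upperUnipotent.toMonoidHom) v ≠ 0 := by
    rwa [Representation.norm, LinearMap.sum_apply, ← Equiv.sum_comp Multiplicative.ofAdd]
  rw [← Fintype.card_multiplicative]
  exact (linearIndependent_of_norm_apply_ne_zero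
    (ZModModule.isPGroup_multiplicative (n := p)) hnorm).fintype_card_le_finrank

variable (ρ) in
theorem exists_isHighestWeightVector (p : ℕ) [Fact p.Prime] [CharP F p] [CharP k p]
    [IsAlgClosed k] [FiniteDimensional k V] [Nontrivial V] [Finite F] :
    ∃ χ v, IsHighestWeightVector ρ χ v := by
  let _ := ZMod.algebra F p
  let U := Representation.invariants (ρ.comp upperUnipotent.toMonoidHom)
  have hU (s : Fˣ) (w : V) (hw : w ∈ U) : ρ (diagonalTorus s) w ∈ U := fun (t : F) ↦ by
    have hfix : ρ (upperUnipotent ((s ^ 2 : Fˣ)⁻¹ * t)) w = w := hw _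
    have hconj : upperUnipotent t * diagonalTorus s =
        diagonalTorus s * upperUnipotent ((s ^ 2 : Fˣ)⁻¹ * t) := by
      simp [diagonalTorus_mul_upperUnipotent]
    change ρ (upperUnipotent t) _ = _
    rw [← Module.End.mul_apply, ← map_mul, hconj, map_mul, Module.End.mul_apply, hfix]
  let T : Subrepresentation (ρ.comp diagonalTorus) := ⟨U, hU⟩
  have : Nontrivial T.toSubmodule := by
    obtain ⟨w, hw, hw0⟩ := exists_mem_invariants_ne_zero
      (ρ := ρ.comp upperUnipotent.toMonoidHom) (ZModModule.isPGroup_multiplicative (n := p))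
    exact Submodule.nontrivial_iff_ne_bot.2 (Submodule.ne_bot_iff _ |>.2 ⟨w, hw, hw0⟩)
  obtain ⟨χ, v, hv, hχ⟩ := exists_forall_apply_eq_smul T.toRepresentation
  exact ⟨χ, v, fun h ↦ hv (Subtype.ext h), v.2, fun s ↦ congrArg Subtype.val (hχ s)⟩

theorem diagonalTorus_apply_mem {a : Fˣ} (ha : ∀ b, b ∈ Submonoid.powers a) {θ : k}
    {W : Submodule k V} (hW : LinearMap.range (ρ (diagonalTorus a) - θ • 1) ≤ W)
    {w : V} (hw : w ∈ W) (s : Fˣ) : ρ (diagonalTorus s) w ∈ W := by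
  obtain ⟨n, rfl⟩ := Submonoid.mem_powers_iff _ _ |>.1 (ha s)
  induction n with
  | zero => simpa using hw
  | succ n ih =>
    rw [pow_succ', map_mul, map_mul, Module.End.mul_apply]
    exact apply_mem_of_range_sub_smul_one_le hW ih

namespace IsHighestWeightVector

section EigenspaceBound

variable [CharP F 2] {a : Fˣ} {θ : k}

theorem unipotent_weyl_mem [Finite F] (hv : IsHighestWeightVector ρ χ v)
    (ha : ∀ b, b ∈ Submonoid.powers a) {W : Submodule k V}
    (hW : LinearMap.range (ρ (diagonalTorus a) - θ • 1) ≤ W)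
    (h1 : ρ (upperUnipotent 1) (ρ (weylElement F) v) ∈ W) (t : Fˣ) :
    ρ (upperUnipotent (t : F)) (ρ (weylElement F) v) ∈ W := by
  obtain ⟨s, hs⟩ := FiniteField.isSquare_of_char_two (ringChar.eq F 2) (t : F)
  have hs0 : s ≠ 0 := by
    rintro rfl
    simp at hs
  have hmem := diagonalTorus_apply_mem ha hW h1 (Units.mk0 s hs0)
  rw [hv.torus_unipotent_weyl, W.smul_mem_iff ((Group.isUnit _).map χ).ne_zero] at hmem
  simpa [hs, sq] using hmem

theorem eq_top_of_range_le [Finite F] [ρ.IsIrreducible] (hv : IsHighestWeightVector ρ χ v)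
    (ha : ∀ b, b ∈ Submonoid.powers a) {W : Submodule k V}
    (hW : LinearMap.range (ρ (diagonalTorus a) - θ • 1) ≤ W) (hvW : v ∈ W)
    (h0 : ρ (weylElement F) v ∈ W) (h1 : ρ (upperUnipotent 1) (ρ (weylElement F) v) ∈ W) :
    W = ⊤ := by
  refine hv.eq_top_of_mem hvW fun t ↦ ?_
  rcases eq_or_ne t 0 with rfl | ht
  · simpa using h0
  · exact hv.unipotent_weyl_mem ha hW h1 (Units.mk0 t ht)

theorem finrank_eigenspace_le_one [Fintype F] [FiniteDimensional k V] [ρ.IsIrreducible]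
    (hv : IsHighestWeightVector ρ χ v) (ha : ∀ b, b ∈ Submonoid.powers a)
    (hsum : ∑ t, ρ (upperUnipotent t) (ρ (weylElement F) v) = 0) :
    Module.finrank k (Module.End.eigenspace (ρ (diagonalTorus a)) θ) ≤ 1 := by
  refine finrank_eigenspace_le_card (s := {ρ (upperUnipotent 1) (ρ (weylElement F) v)})
    fun W hW hs ↦ ?_
  have h1 : ρ (upperUnipotent 1) (ρ (weylElement F) v) ∈ W := hs _ (Finset.mem_singleton_self _)
  have hunip := hv.unipotent_weyl_mem ha hW h1
  exact hv.eq_top_of_range_le ha hW (hv.mem_of_sum_eq_zero hsum hunip)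
    (mem_of_sum_upperUnipotent_mem (hsum ▸ W.zero_mem) hunip) h1

theorem finrank_eigenspace_le_two [Finite F] [CharP k 2] [FiniteDimensional k V]
    [ρ.IsIrreducible] (hv : IsHighestWeightVector ρ χ v) (hV : 1 < Module.finrank k V)
    (ha : ∀ b, b ∈ Submonoid.powers a) :
    Module.finrank k (Module.End.eigenspace (ρ (diagonalTorus a)) θ) ≤ 2 := by
  classical
  have := Fintype.ofFinite F
  set y := ρ (weylElement F) v with hy
  by_cases hχ' : χ a⁻¹ = θ
  · refine (finrank_eigenspace_le_card (s := {y, ρ (upperUnipotent 1) y}) fun W hW hs ↦ ?_).trans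
      Finset.card_le_two
    obtain ⟨hyW, h1⟩ : y ∈ W ∧ ρ (upperUnipotent 1) y ∈ W := by simpa using hs
    refine hv.eq_top_of_range_le ha hW ?_ hyW h1
    by_cases hχ : χ a = θ
    · rw [hv.eq_neg_sum_of_apply_eq_apply_inv hV ha (hχ.trans hχ'.symm), ← hy,
        sum_eq_zero_add_sum_units]
      refine W.neg_mem (W.add_mem (by simpa using hyW) (W.sum_mem fun s _ ↦ ?_))
      exact hv.unipotent_weyl_mem ha hW h1 s
    · exact hW (mem_range_sub_smul_one (hv.torus_apply a) hχ)
  · refine (finrank_eigenspace_le_card (s := {v, ρ (upperUnipotent 1) y}) fun W hW hs ↦ ?_).trans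
      Finset.card_le_two
    obtain ⟨hvW, h1⟩ : v ∈ W ∧ ρ (upperUnipotent 1) y ∈ W := by simpa using hs
    exact hv.eq_top_of_range_le ha hW hvW (hW (mem_range_sub_smul_one (hv.torus_weyl a) hχ')) h1

end EigenspaceBound

end IsHighestWeightVector

end HighestWeight

theorem three_mul_finrank_eigenspace_diagonalTorus_le {F k V : Type*} [Field F] [Fintype F]
    [CharP F 2] [Field k] [IsAlgClosed k] [CharP k 2] [AddCommGroup V] [Module k V]
    [FiniteDimensional k V] {ρ : Representation k (Matrix.SpecialLinearGroup (Fin 2) F) V}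
    [ρ.IsIrreducible] (hq : 5 < Fintype.card F) (hdim : 2 < Module.finrank k V)
    {a : Fˣ} (ha : ∀ b, b ∈ Submonoid.powers a) (θ : k) :
    3 * Module.finrank k (Module.End.eigenspace (ρ (diagonalTorus a)) θ) ≤ Module.finrank k V := by
  have : Nontrivial V := Module.nontrivial_of_finrank_pos (R := k) (by lia)
  obtain ⟨χ, v, hv⟩ := exists_isHighestWeightVector ρ 2
  by_cases hsum : ∑ t, ρ (upperUnipotent t) (ρ (weylElement F) v) = 0
  · have := hv.finrank_eigenspace_le_one (θ := θ) ha hsum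
    lia
  · have := hv.finrank_eigenspace_le_two (θ := θ) (by lia) ha
    have := card_le_finrank_of_sum_upperUnipotent_ne_zero 2 hsum
    lia

theorem mem_powers_of_orderOf_diagonalTorus {K : Type*} [Field K] [Fintype K] {a : Kˣ}
    (ha : orderOf (diagonalTorus a) = Fintype.card K - 1) (b : Kˣ) : b ∈ Submonoid.powers a := by
  classical
  rw [orderOf_injective _ diagonalTorus_injective, ← Fintype.card_units] at ha
  have htop : Subgroup.zpowers a = ⊤ :=
    Subgroup.eq_top_of_card_eq _ (by rw [Nat.card_zpowers, ha, Nat.card_eq_fintype_card])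
  exact mem_powers_iff_mem_zpowers.2 (htop ▸ Subgroup.mem_top b)

/-- Let `G = SL₂(q) = PSL₂(q)` with `q > 7` even and `x ∈ G` of order `q - 1`.
If `k` is algebraically closed of characteristic `2` and `V` a nontrivial
irreducible `kG`-module of dimension `> 2`, then every eigenspace of `x` on `V`
has dimension at most `(1/3) dim V`. -/
theorem stmt_7 (F : Type*) [Field F] [Fintype F] [CharP F 2]
    (hq : 7 < Fintype.card F)
    (x : Matrix.SpecialLinearGroup (Fin 2) F)
    (hx : orderOf x = Fintype.card F - 1)
    (k : Type*) [Field k] [IsAlgClosed k] [CharP k 2]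
    (V : Type*) [AddCommGroup V] [Module k V] [FiniteDimensional k V]
    (ρ : Representation k (Matrix.SpecialLinearGroup (Fin 2) F) V)
    (hirr : ∀ W : Submodule k V,
      (∀ g : Matrix.SpecialLinearGroup (Fin 2) F, ∀ v ∈ W, ρ g v ∈ W) → W = ⊥ ∨ W = ⊤)
    (hnt : ∃ (g : Matrix.SpecialLinearGroup (Fin 2) F) (v : V), ρ g v ≠ v)
    (hdim : 2 < Module.finrank k V) :
    ∀ θ : k, 3 * Module.finrank k (Module.End.eigenspace (ρ x) θ) ≤
      Module.finrank k V := by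
  have : Nontrivial V := Module.nontrivial_of_finrank_pos (R := k) (by lia)
  have : ρ.IsIrreducible := isIrreducible_of_forall_eq_bot_or_eq_top hirr
  obtain ⟨P, a, rfl⟩ := exists_conj_diagonalTorus_eq (x := x) (hx ▸ pow_orderOf_eq_one x)
  rw [MulEquiv.orderOf_eq] at hx
  have := isIrreducible_comp_of_surjective (ρ := ρ) (φ := (MulAut.conj P).toMonoidHom)
    (MulAut.conj P).surjective
  exact three_mul_finrank_eigenspace_diagonalTorus_le
    (ρ := ρ.comp (MulAut.conj P).toMonoidHom) (by lia) hdim (mem_powers_of_orderOf_diagonalTorus hx)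
end

section
/- Let G be a (possibly infinite) group and V a finite-dimensional vector space over a field k on which G acts irreducibly and nontrivially via ρ: G → GL(V). Assuming the result for finite groups (that every finite group acting irreducibly and nontrivially on a finite-dimensional vector space contains an element whose fixed space has dimension at most one third of the dimension), there exists g ∈ G with dim C_V(g) ≤ (1/3) dim V. -/
/-!
The group is compared with a finite one by specializing matrix entries to a finite field.

Irreducibility may be lost under specialization, but spanning the whole matrix algebra is an open
condition: it is the nonvanishing of one determinant, which survives once its inverse is adjoined
to the ring being specialized. To get the spanning, one first makes the representation absolutely
irreducible by viewing `V` over a maximal commutative subalgebra `K` of the algebra of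
endomorphisms commuting with `G`. By Schur's lemma `K` is a field, by maximality only the scalars
of `K` commute with both `G` and `K`, and Jacobson density gives that `G` spans `End K V`. All
dimensions over `k` are `[K : k]` times those over `K`.

The specialized group is not the image of `G` but of the elements whose matrices, together with
their inverses, are defined over a finitely generated subring of `K`. Minors that are nonzero after
specialization are nonzero before it, so specialization can only lower the rank of `g - 1`, and a
bound on the fixed space of a member of the finite group lifts to `G`.
-/

open Module Matrix

section FiniteResidueField

theorem isJacobsonRing_of_jacobson_eq_bot (R : Type*) [CommRing R] [Ring.DimensionLEOne R]
    (hR : Ring.jacobson R = ⊥) : IsJacobsonRing R := by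
  refine isJacobsonRing_iff_prime_eq.2 fun P hP ↦ ?_
  obtain rfl | hP_bot := eq_or_ne P ⊥
  · rw [Ideal.jacobson_bot, hR]
  · have := hP.isMaximal hP_bot
    exact Ideal.jacobson_eq_self_of_isMaximal

theorem int_jacobson_eq_bot : Ring.jacobson ℤ = ⊥ := by
  refine eq_bot_iff.2 fun x hx ↦ ?_
  rw [← Ideal.jacobson_bot, Ideal.mem_jacobson_bot] at hx
  -- The coefficient `3` rules out the unit `-1`, since `3 * x ^ 2 = -2` has no solution.
  have hunit : x * (3 * x) + 1 = 1 ∨ x * (3 * x) + 1 = -1 := Int.isUnit_iff.1 (hx (3 * x))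
  rw [Ideal.mem_bot]
  rcases hunit with h | h <;> nlinarith [mul_self_nonneg x]

theorem finite_of_field_of_finiteType_int (F : Type*) [Field F] [Algebra.FiniteType ℤ F] :
    Finite F := by
  have : IsJacobsonRing ℤ := isJacobsonRing_of_jacobson_eq_bot ℤ int_jacobson_eq_bot
  have : Module.Finite ℤ F := finite_of_finite_type_of_isJacobsonRing ℤ F
  have hinj : ¬ Function.Injective (algebraMap ℤ F) := fun h ↦
    Int.not_isField (isField_of_isIntegral_of_isField h (Field.toIsField F))
  obtain ⟨m, hm, hm_ne⟩ : ∃ m : ℤ, (m : F) = 0 ∧ m ≠ 0 := by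
    simpa only [injective_iff_map_eq_zero, eq_intCast, not_forall, exists_prop] using hinj
  refine Module.finite_of_fg_torsion F fun {x} ↦ ⟨⟨m, mem_nonZeroDivisors_of_ne_zero hm_ne⟩, ?_⟩
  rw [Submonoid.mk_smul, zsmul_eq_mul, hm, zero_mul]

theorem exists_ringHom_finite_field (R : Type*) [CommRing R] [Nontrivial R]
    [Algebra.FiniteType ℤ R] :
    ∃ (F : Type) (_ : Field F) (_ : Finite F), Nonempty (R →+* F) := by
  obtain ⟨M, hM⟩ := Ideal.exists_maximal R
  let := Ideal.Quotient.field M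
  have hfg : Algebra.FiniteType ℤ (R ⧸ M) :=
    .of_surjective (Ideal.Quotient.mk M).toIntAlgHom Ideal.Quotient.mk_surjective
  have : Finite (R ⧸ M) := @finite_of_field_of_finiteType_int (R ⧸ M) _ hfg
  exact ⟨Shrink.{0} (R ⧸ M), inferInstance, inferInstance,
    ⟨(Shrink.ringEquiv.{0} (R ⧸ M)).symm.toRingHom.comp (Ideal.Quotient.mk M)⟩⟩

theorem exists_subring_ringHom_finite_field {K : Type*} [Field K] {T : Set K} (hT : T.Finite) :
    ∃ (R : Subring K) (F : Type) (_ : Field F) (_ : Finite F) (q : R →+* F),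
      T ⊆ R ∧ ∀ x : R, (x : K) ∈ T → x ≠ 0 → q x ≠ 0 := by
  -- Adjoining the inverses turns the nonzero elements of `T` into units, which no `q` can kill.
  have := Algebra.FiniteType.adjoin_of_finite (R := ℤ) (hT.union hT.inv)
  obtain ⟨F, _, _, ⟨q⟩⟩ := exists_ringHom_finite_field (Algebra.adjoin ℤ (T ∪ T⁻¹))
  refine ⟨(Algebra.adjoin ℤ (T ∪ T⁻¹)).toSubring, F, inferInstance, inferInstance, q,
    fun t ht ↦ Algebra.subset_adjoin (.inl ht), fun x hxT hx ↦ ?_⟩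
  have hinv : (x : K)⁻¹ ∈ Algebra.adjoin ℤ (T ∪ T⁻¹) :=
    Algebra.subset_adjoin (.inr (Set.inv_mem_inv.2 hxT))
  have hunit : IsUnit x := .of_mul_eq_one ⟨_, hinv⟩ <|
    Subtype.ext <| mul_inv_cancel₀ (Subtype.coe_ne_coe.2 hx)
  exact (hunit.map q).ne_zero

end FiniteResidueField

section Rank

variable {m n K : Type*} [Field K]

theorem exists_linearIndependent_row_submatrix [Finite m] [Fintype n] {A : Matrix m n K} {s : ℕ}
    (hA : A.rank = s) : ∃ r : Fin s → m, LinearIndependent K (A.submatrix r id).row := by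
  obtain ⟨f, hf, -, hli⟩ := Submodule.exists_fun_fin_finrank_span_eq K (Set.range A.row)
  choose r hr using hf
  rw [← hA, rank_eq_finrank_span_row]
  exact ⟨r, by rwa [← funext hr] at hli⟩

theorem exists_det_submatrix_ne_zero [Finite m] [Fintype n] (A : Matrix m n K) :
    ∃ (r : Fin A.rank → m) (c : Fin A.rank → n), (A.submatrix r c).det ≠ 0 := by
  cases nonempty_fintype m
  obtain ⟨r, hr⟩ := exists_linearIndependent_row_submatrix (rfl : A.rank = A.rank)
  have hrank : (A.submatrix r id)ᵀ.rank = A.rank := by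
    rw [rank_transpose, hr.rank_matrix, Fintype.card_fin]
  obtain ⟨c, hc⟩ := exists_linearIndependent_row_submatrix hrank
  have hunit : IsUnit (A.submatrix r c)ᵀ := linearIndependent_rows_iff_isUnit.1 hc
  rw [isUnit_transpose, isUnit_iff_isUnit_det] at hunit
  exact ⟨r, c, hunit.ne_zero⟩

theorem rank_map_le_rank_map [Finite m] [Fintype n] {R F : Type*} [CommRing R] [Field F]
    (A : Matrix m n R) (q : R →+* F) {ψ : R →+* K} (hψ : Function.Injective ψ) :
    (A.map q).rank ≤ (A.map ψ).rank := by
  cases nonempty_fintype m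
  obtain ⟨r, c, hrc⟩ := exists_det_submatrix_ne_zero (A.map q)
  have hdet : (A.submatrix r c).det ≠ 0 := by
    intro h
    rw [submatrix_map, ← q.mapMatrix_apply, ← q.map_det, h, map_zero] at hrc
    exact hrc rfl
  have hdet_map : ((A.map ψ).submatrix r c).det ≠ 0 := by
    rwa [submatrix_map, ← ψ.mapMatrix_apply, ← ψ.map_det, map_ne_zero_iff ψ hψ]
  calc (A.map q).rank = ((A.map ψ).submatrix r c).rank := by
        rw [rank_of_det_ne_zero hdet_map, Fintype.card_fin]
    _ ≤ (A.map ψ).rank := rank_submatrix_le ..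

end Rank

section Map

theorem matrix_map_sub_one {n R S : Type*} [DecidableEq n] [Ring R] [Ring S] (φ : R →+* S)
    (A : Matrix n n R) : (A - 1).map φ = A.map φ - 1 := by
  rw [Matrix.map_sub φ (map_sub φ), Matrix.map_one φ (map_zero φ) (map_one φ)]

end Map

section Spanning

variable {ι K V : Type*} [Field K] [AddCommGroup V] [Module K V]

theorem exists_basis_det_ne_zero_of_span_eq_top [Fintype ι] [DecidableEq ι] (b : Basis ι K V)
    {S : Set V} (hS : Submodule.span K S = ⊤) : ∃ v : ι → V, (∀ i, v i ∈ S) ∧ b.det v ≠ 0 := by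
  have := b.finiteDimensional_of_finite
  obtain ⟨f, hf, hspan, hli⟩ := Submodule.exists_fun_fin_finrank_span_eq K S
  have hcard : Fintype.card ι = finrank K (Submodule.span K S) := by
    rw [hS, finrank_top, finrank_eq_card_basis b]
  let e := Fintype.equivFinOfCardEq hcard
  refine ⟨f ∘ e, fun i ↦ hf _, (b.is_basis_iff_det.1 ⟨hli.comp e e.injective, ?_⟩).ne_zero⟩
  rw [e.surjective.range_comp, hspan, hS]

theorem map_stdBasis_det {n R S : Type*} [Fintype n] [DecidableEq n] [CommRing R] [CommRing S]
    (φ : R →+* S) (X : n × n → Matrix n n R) :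
    φ ((Matrix.stdBasis R n n).det X) = (Matrix.stdBasis S n n).det fun p ↦ (X p).map φ := by
  rw [Basis.det_apply, Basis.det_apply, φ.map_det]
  rfl

end Spanning

section Specialization

variable {n K F : Type*} [Fintype n] [DecidableEq n] [Field K] [Field F]

/-- The specialization of a matrix group `Γ` over `K` along a ring homomorphism `q` defined on a
subring `R` of `K`: apply `q` entrywise to the members of `Γ` which, together with their inverses,
have all entries in `R`. -/
def specialization (Γ : Subgroup (GL n K)) {R : Subring K} (q : R →+* F) : Subgroup (GL n F) :=
  (Γ.comap (GeneralLinearGroup.map R.subtype)).map (GeneralLinearGroup.map q)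

theorem mem_range_map_subtype {R : Subring K} {g : GL n K} (hg : ∀ i j, g i j ∈ R)
    (hg_inv : ∀ i j, g⁻¹ i j ∈ R) : g ∈ (GeneralLinearGroup.map (n := n) R.subtype).range := by
  have hinj : Function.Injective (R.subtype.mapMatrix (m := n)) :=
    Matrix.map_injective R.subtype_injective
  let A : Matrix n n R := .of fun i j ↦ ⟨g i j, hg i j⟩
  let B : Matrix n n R := .of fun i j ↦ ⟨g⁻¹ i j, hg_inv i j⟩
  have hA : R.subtype.mapMatrix A = g := rfl
  have hB : R.subtype.mapMatrix B = (g⁻¹ : GL n K) := rfl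
  refine ⟨⟨A, B, hinj ?_, hinj ?_⟩, Units.ext hA⟩ <;>
    rw [map_mul, hA, hB, map_one, ← Units.val_mul]
  · rw [mul_inv_cancel, Units.val_one]
  · rw [inv_mul_cancel, Units.val_one]

theorem exists_rank_sub_one_le_of_mem_specialization {Γ : Subgroup (GL n K)} {R : Subring K}
    {q : R →+* F} {h : GL n F} (hh : h ∈ specialization Γ q) :
    ∃ g ∈ Γ, (h.val - 1).rank ≤ (g.val - 1).rank := by
  obtain ⟨X, hX, rfl⟩ := hh
  refine ⟨_, hX, ?_⟩
  calc ((GeneralLinearGroup.map q X).val - 1).rank = ((X.val - 1).map q).rank :=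
        congrArg rank (matrix_map_sub_one q X.val).symm
    _ ≤ ((X.val - 1).map R.subtype).rank := rank_map_le_rank_map _ q R.subtype_injective
    _ = ((GeneralLinearGroup.map R.subtype X).val - 1).rank :=
        congrArg rank (matrix_map_sub_one R.subtype X.val)

theorem span_specialization_eq_top {Γ : Subgroup (GL n K)} {R : Subring K} {q : R →+* F}
    {X : n × n → GL n R} (hX : ∀ p, GeneralLinearGroup.map R.subtype (X p) ∈ Γ)
    (hdet : q ((Matrix.stdBasis R n n).det fun p ↦ (X p).val) ≠ 0) :
    Submodule.span F (Units.val '' (specialization Γ q : Set (GL n F))) = ⊤ := by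
  rw [map_stdBasis_det] at hdet
  obtain ⟨-, hspan⟩ := (Basis.is_basis_iff_det _).2 hdet.isUnit
  refine top_unique (hspan.ge.trans (Submodule.span_mono ?_))
  rintro _ ⟨p, rfl⟩
  exact ⟨_, ⟨X p, hX p, rfl⟩, rfl⟩

theorem specialization_ne_bot {Γ : Subgroup (GL n K)} {R : Subring K} {q : R →+* F}
    {X : GL n R} (hX : GeneralLinearGroup.map R.subtype X ∈ Γ) {i j : n}
    (hij : q (X i j - (1 : Matrix n n R) i j) ≠ 0) : specialization Γ q ≠ ⊥ := by
  intro hbot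
  have hone : GeneralLinearGroup.map q X = 1 :=
    (Subgroup.eq_bot_iff_forall _).1 hbot _ ⟨X, hX, rfl⟩
  refine hij ?_
  have hentry : q (X i j) = (1 : Matrix n n F) i j := congrArg (fun Y : GL n F ↦ Y i j) hone
  have hone_entry : q ((1 : Matrix n n R) i j) = (1 : Matrix n n F) i j :=
    congrFun₂ (map_one q.mapMatrix) i j
  rw [map_sub, hentry, hone_entry, sub_self]

theorem exists_subring_ringHom_finite_field_of_finite {S : Set (GL n K)} (hS : S.Finite)
    {T : Set K} (hT : T.Finite) :
    ∃ (R : Subring K) (F : Type) (_ : Field F) (_ : Finite F) (q : R →+* F),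
      S ⊆ (GeneralLinearGroup.map (n := n) R.subtype).range ∧
        ∀ x : R, (x : K) ∈ T → x ≠ 0 → q x ≠ 0 := by
  let entries (g : GL n K) : Set K :=
    Set.range (fun p : n × n ↦ g p.1 p.2) ∪ Set.range fun p : n × n ↦ g⁻¹ p.1 p.2
  have hentries : (⋃ g ∈ S, entries g).Finite :=
    hS.biUnion fun g _ ↦ (Set.finite_range _).union (Set.finite_range _)
  obtain ⟨R, F, _, _, q, hR, hq⟩ := exists_subring_ringHom_finite_field (hentries.union hT)
  refine ⟨R, F, inferInstance, inferInstance, q, fun g hg ↦ ?_, fun x hx ↦ hq x (.inr hx)⟩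
  have hgR : entries g ⊆ R := fun x hx ↦ hR (.inl (Set.mem_biUnion hg hx))
  exact mem_range_map_subtype (fun i j ↦ hgR (.inl ⟨(i, j), rfl⟩))
    fun i j ↦ hgR (.inr ⟨(i, j), rfl⟩)

theorem exists_finite_field_specialization {Γ : Subgroup (GL n K)}
    (hspan : Submodule.span K (Units.val '' (Γ : Set (GL n K))) = ⊤) (hΓ : Γ ≠ ⊥) :
    ∃ (F : Type) (_ : Field F) (_ : Finite F) (H : Subgroup (GL n F)),
      Submodule.span F (Units.val '' (H : Set (GL n F))) = ⊤ ∧ H ≠ ⊥ ∧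
        ∀ h ∈ H, ∃ g ∈ Γ, (h.val - 1).rank ≤ (g.val - 1).rank := by
  obtain ⟨v, hv, hdet⟩ := exists_basis_det_ne_zero_of_span_eq_top (Matrix.stdBasis K n n) hspan
  choose γ hγ hγv using hv
  obtain ⟨g₀, hg₀, hg₀_ne⟩ := Γ.bot_or_exists_ne_one.resolve_left hΓ
  obtain ⟨i, j, hij⟩ : ∃ i j, g₀ i j ≠ (1 : Matrix n n K) i j := by
    by_contra! h
    exact hg₀_ne (Units.ext (Matrix.ext h))
  obtain ⟨R, F, _, _, q, hlift, hq⟩ := exists_subring_ringHom_finite_field_of_finite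
    ((Set.finite_range γ).insert g₀)
    (Set.toFinite {(Matrix.stdBasis K n n).det v, g₀ i j - (1 : Matrix n n K) i j})
  choose X hX using fun p ↦ hlift (.inr ⟨p, rfl⟩ : γ p ∈ insert g₀ (Set.range γ))
  obtain ⟨Y, hY⟩ := hlift (Set.mem_insert g₀ _)
  have hX_det : R.subtype ((Matrix.stdBasis R n n).det fun p ↦ (X p).val) =
      (Matrix.stdBasis K n n).det v := by
    rw [map_stdBasis_det]
    exact congrArg _ (funext fun p ↦ (congrArg Units.val (hX p)).trans (hγv p))
  have hY_entry : R.subtype (Y i j - (1 : Matrix n n R) i j) =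
      g₀ i j - (1 : Matrix n n K) i j := by
    rw [map_sub, ← hY]
    exact congrArg _ (congrFun₂ (map_one (R.subtype.mapMatrix (m := n))) i j)
  refine ⟨F, inferInstance, inferInstance, specialization Γ q,
    span_specialization_eq_top (X := X) (fun p ↦ hX p ▸ hγ p) (hq _ (.inl hX_det) ?_),
    specialization_ne_bot (X := Y) (i := i) (j := j) (hY ▸ hg₀) (hq _ (.inr hY_entry) ?_),
    fun h hh ↦ exists_rank_sub_one_le_of_mem_specialization hh⟩
  · intro h
    exact hdet (by rw [← hX_det, h, map_zero])
  · intro h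
    exact sub_ne_zero.2 hij (by rw [← hY_entry, h, map_zero])

end Specialization

section MaximalCommutative

variable {k A : Type*} [CommRing k] [Ring A] [Algebra k A]

theorem exists_maximal_commutative_subalgebra (D : Subalgebra k A) :
    ∃ K : Subalgebra k A, Maximal (fun L ↦ L ≤ D ∧ IsMulCommutative L) K := by
  refine (zorn_le_nonempty₀ {L : Subalgebra k A | L ≤ D ∧ IsMulCommutative L}
    (fun c hc hchain L hL ↦ ⟨sSup c, ⟨sSup_le fun M hM ↦ (hc hM).1, ?_⟩, fun M hM ↦ le_sSup hM⟩)
    ⊥ ⟨bot_le, ?_⟩).imp fun K hK ↦ hK.2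
  · have : Nonempty c := ⟨⟨L, hL⟩⟩
    have (M : c) : IsMulCommutative M.1 := (hc M.2).2
    rw [sSup_eq_iSup']
    exact Subalgebra.isMulCommutative_iSup hchain.directedOn.directed_val
  · exact Algebra.adjoin_empty k A ▸ Algebra.isMulCommutative_adjoin k fun _ h ↦ h.elim

theorem mem_of_maximal_commutative {D K : Subalgebra k A}
    (hK : Maximal (fun L ↦ L ≤ D ∧ IsMulCommutative L) K) {a : A} (haD : a ∈ D)
    (ha : a ∈ Subalgebra.centralizer k (K : Set A)) : a ∈ K := by
  have := hK.prop.2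
  have hcomm : ∀ x ∈ insert a (K : Set A), ∀ y ∈ insert a (K : Set A), x * y = y * x := by
    rintro x (rfl | hx) y (rfl | hy)
    · rfl
    · exact (ha y hy).symm
    · exact ha x hx
    · exact setLike_mul_comm hx hy
  have hle : Algebra.adjoin k (insert a (K : Set A)) ≤ K :=
    hK.le_of_ge ⟨Algebra.adjoin_le (Set.insert_subset haD hK.prop.1),
      Algebra.isMulCommutative_adjoin k hcomm⟩
      fun x hx ↦ Algebra.subset_adjoin (Set.mem_insert_of_mem a hx)
  exact hle (Algebra.subset_adjoin (Set.mem_insert a _))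

end MaximalCommutative

section Density

variable {K V : Type*} [Field K] [AddCommGroup V] [Module K V] [FiniteDimensional K V]

theorem eq_top_of_commute_imp_scalar {B : Subalgebra K (End K V)} [IsSimpleModule B V]
    (hB : ∀ f : End K V, (∀ b ∈ B, Commute b f) → ∃ c : K, ∀ v, f v = c • v) : B = ⊤ := by
  classical
  refine eq_top_iff.2 fun f _ ↦ ?_
  have hscalar (φ : End B V) : ∃ c : K, ∀ v, φ v = c • v :=
    hB (φ.restrictScalars K) fun b hb ↦ LinearMap.ext fun v ↦ (φ.map_smul ⟨b, hb⟩ v).symm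
  let f' : End (End B V) V :=
    { f with
      map_smul' φ v := by
        obtain ⟨c, hc⟩ := hscalar φ
        simp [hc] }
  obtain ⟨b, hb⟩ := jacobson_density f' (Finset.univ.image (finBasis K V))
  have hfb : f = b := (finBasis K V).ext fun i ↦
    hb _ (Finset.mem_image_of_mem _ (Finset.mem_univ i))
  exact hfb ▸ b.2

end Density

section Representation

variable {G k V : Type*} [Monoid G] [Field k] [AddCommGroup V] [Module k V]

theorem isIrreducible_iff_forall_submodule {ρ : Representation k G V} :
    ρ.IsIrreducible ↔ Nontrivial V ∧
      ∀ W : Submodule k V, (∀ g, ∀ v ∈ W, ρ g v ∈ W) → W = ⊥ ∨ W = ⊤ := by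
  have hbot {U : Subrepresentation ρ} : U = ⊥ ↔ U.toSubmodule = ⊥ :=
    Subrepresentation.toSubmodule_injective.eq_iff.symm
  have htop {U : Subrepresentation ρ} : U = ⊤ ↔ U.toSubmodule = ⊤ :=
    Subrepresentation.toSubmodule_injective.eq_iff.symm
  constructor
  · intro h
    refine ⟨(Submodule.nontrivial_iff k).1 ⟨⊥, ⊤, fun heq ↦ bot_ne_top (htop.2 heq)⟩,
      fun W hW ↦ ?_⟩
    simpa only [hbot, htop] using eq_bot_or_eq_top (⟨W, hW⟩ : Subrepresentation ρ)
  · rintro ⟨_, h⟩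
    exact
      { exists_pair_ne := ⟨⊥, ⊤, fun heq ↦ bot_ne_top (htop.1 heq)⟩
        eq_bot_or_eq_top := fun U ↦ by simpa only [hbot, htop] using h _ U.apply_mem_toSubmodule }

theorem injective_of_mem_centralizer_range {ρ : Representation k G V} (hρ : ρ.IsIrreducible)
    {d : End k V} (hd : d ∈ Subalgebra.centralizer k (Set.range ρ)) (hd_ne : d ≠ 0) :
    Function.Injective d := by
  have hker : LinearMap.ker d = ⊥ ∨ LinearMap.ker d = ⊤ := by
    refine (isIrreducible_iff_forall_submodule.1 hρ).2 _ fun g v hv ↦ ?_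
    have hcomm : ρ g (d v) = d (ρ g v) := LinearMap.congr_fun (hd _ ⟨g, rfl⟩) v
    rw [LinearMap.mem_ker, ← hcomm, hv, map_zero]
  exact LinearMap.ker_eq_bot.1 (hker.resolve_right fun h ↦ hd_ne (LinearMap.ker_eq_top.1 h))

theorem adjoin_range_eq_span (ρ : Representation k G V) :
    (Algebra.adjoin k (Set.range ρ)).toSubmodule = Submodule.span k (Set.range ρ) := by
  rw [Algebra.adjoin_eq_span, ← MonoidHom.coe_mrange, Submonoid.closure_eq]

theorem isSimpleModule_adjoin_range {ρ : Representation k G V} (hρ : ρ.IsIrreducible) :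
    IsSimpleModule (Algebra.adjoin k (Set.range ρ)) V := by
  obtain ⟨_, hsub⟩ := isIrreducible_iff_forall_submodule.1 hρ
  have hadjoin (g : G) : ρ g ∈ Algebra.adjoin k (Set.range ρ) := Algebra.subset_adjoin ⟨g, rfl⟩
  refine { eq_bot_or_eq_top := fun W ↦ ?_ }
  have h := hsub (W.restrictScalars k) fun g v hv ↦ W.smul_mem ⟨ρ g, hadjoin g⟩ hv
  simpa only [Submodule.restrictScalars_eq_bot_iff, Submodule.restrictScalars_eq_top_iff] using h

theorem span_range_eq_top_of_commute_imp_scalar [FiniteDimensional k V] {ρ : Representation k G V}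
    (hρ : ρ.IsIrreducible)
    (hscalar : ∀ f : End k V, (∀ g, Commute (ρ g) f) → ∃ c : k, ∀ v, f v = c • v) :
    Submodule.span k (Set.range ρ) = ⊤ := by
  have := isSimpleModule_adjoin_range hρ
  have htop : Algebra.adjoin k (Set.range ρ) = ⊤ :=
    eq_top_of_commute_imp_scalar fun f hf ↦
      hscalar f fun g ↦ hf _ (Algebra.subset_adjoin ⟨g, rfl⟩)
  rw [← adjoin_range_eq_span, htop, Algebra.top_toSubmodule]

theorem isIrreducible_of_span_range_eq_top [Nontrivial V] {ρ : Representation k G V}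
    (hspan : Submodule.span k (Set.range ρ) = ⊤) : ρ.IsIrreducible := by
  refine isIrreducible_iff_forall_submodule.2 ⟨inferInstance, fun W hW ↦ or_iff_not_imp_left.2 ?_⟩
  intro hW_bot
  obtain ⟨w, hw, hw_ne⟩ := W.ne_bot_iff.1 hW_bot
  have hstable (f : End k V) : f w ∈ W := by
    have hle : Submodule.span k (Set.range ρ) ≤ W.comap (LinearMap.applyₗ w) :=
      Submodule.span_le.2 (Set.range_subset_iff.2 fun g ↦ hW g w hw)
    exact hle (hspan ▸ Submodule.mem_top)
  refine eq_top_iff.2 fun v _ ↦ ?_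
  obtain ⟨f, rfl⟩ := IsSimpleModule.toSpanSingleton_surjective (End k V) hw_ne v
  exact hstable f

theorem isIrreducible_of_restrictScalars {K : Type*} [Field K] [Algebra k K] [Module K V]
    [IsScalarTower k K V] {ρ : Representation k G V} (hρ : ρ.IsIrreducible)
    {ρ' : Representation K G V} (hρ' : ∀ g v, ρ' g v = ρ g v) : ρ'.IsIrreducible := by
  obtain ⟨hV, hsub⟩ := isIrreducible_iff_forall_submodule.1 hρ
  refine isIrreducible_iff_forall_submodule.2 ⟨hV, fun W hW ↦ ?_⟩
  have h := hsub (W.restrictScalars k) fun g v hv ↦ hρ' g v ▸ hW g v hv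
  simpa only [Submodule.restrictScalars_eq_bot_iff, Submodule.restrictScalars_eq_top_iff] using h

open scoped IsMulCommutative

theorem isField_of_le_centralizer_range [FiniteDimensional k V] {ρ : Representation k G V}
    (hρ : ρ.IsIrreducible) {K : Subalgebra k (End k V)} [IsMulCommutative K]
    (hK : K ≤ Subalgebra.centralizer k (Set.range ρ)) : IsField K := by
  have := (isIrreducible_iff_forall_submodule.1 hρ).1
  have : NoZeroDivisors K := by
    refine ⟨fun {c d} hcd ↦ or_iff_not_imp_left.2 fun hc ↦ Subtype.ext (LinearMap.ext fun v ↦ ?_)⟩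
    refine injective_of_mem_centralizer_range hρ (hK c.2) (Subtype.coe_ne_coe.2 hc) ?_
    exact (LinearMap.congr_fun (congrArg Subtype.val hcd) v).trans (map_zero c.1).symm
  have : IsDomain K := NoZeroDivisors.to_isDomain K
  exact (fieldOfFiniteDimensional k K).toIsField

/-- The representation `ρ` regarded as linear over a commutative algebra `K` of endomorphisms
commuting with `ρ`. -/
def linearOver {K : Subalgebra k (End k V)} [IsMulCommutative K] (ρ : Representation k G V)
    (hK : K ≤ Subalgebra.centralizer k (Set.range ρ)) : Representation K G V where
  toFun g := { ρ g with map_smul' c := LinearMap.congr_fun (hK c.2 _ ⟨g, rfl⟩) }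
  map_one' := LinearMap.ext fun v ↦ LinearMap.congr_fun (map_one ρ) v
  map_mul' g h := LinearMap.ext fun v ↦ LinearMap.congr_fun (map_mul ρ g h) v

end Representation

section ExtendScalars

universe u

open scoped IsMulCommutative

variable {G k : Type*} {V : Type u} [Monoid G] [Field k] [AddCommGroup V] [Module k V]

theorem exists_field_span_range_eq_top [FiniteDimensional k V] {ρ : Representation k G V}
    (hρ : ρ.IsIrreducible) :
    ∃ (K : Type u) (_ : Field K) (_ : Algebra k K) (_ : Module K V) (_ : IsScalarTower k K V)
      (ρ' : Representation K G V),
      (∀ g v, ρ' g v = ρ g v) ∧ Submodule.span K (Set.range ρ') = ⊤ := by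
  obtain ⟨K, hK⟩ := exists_maximal_commutative_subalgebra (Subalgebra.centralizer k (Set.range ρ))
  have ⟨hK_le, hK_comm⟩ := hK.prop
  let := (isField_of_le_centralizer_range hρ hK_le).toField
  have : FiniteDimensional K V := Module.Finite.of_restrictScalars_finite k K V
  refine ⟨K, inferInstance, inferInstance, inferInstance, inferInstance, linearOver ρ hK_le,
    fun g v ↦ rfl, span_range_eq_top_of_commute_imp_scalar
      (isIrreducible_of_restrictScalars hρ fun g v ↦ rfl) fun f hf ↦ ?_⟩
  have hfK : f.restrictScalars k ∈ K := by
    refine mem_of_maximal_commutative hK ?_ fun c hc ↦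
      LinearMap.ext fun v ↦ (f.map_smul (⟨c, hc⟩ : K) v).symm
    rintro _ ⟨g, rfl⟩
    exact LinearMap.ext fun v ↦ LinearMap.congr_fun (hf g) v
  exact ⟨⟨_, hfK⟩, fun v ↦ rfl⟩

end ExtendScalars

section MatrixGroup

/-- The natural representation of a matrix group on column vectors. -/
def naturalRepresentation {n K : Type*} [Fintype n] [DecidableEq n] [Field K]
    (H : Subgroup (GL n K)) : Representation K H (n → K) :=
  (toLinAlgEquiv' (R := K) (n := n) : Matrix n n K →* End K (n → K)).comp
    ((Units.coeHom _).comp H.subtype)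

/-- The group of matrices by which a representation acts with respect to a basis. -/
noncomputable def matrixGroup {ι G K V : Type*} [Fintype ι] [DecidableEq ι] [Group G] [Field K]
    [AddCommGroup V] [Module K V] (b : Basis ι K V) (ρ : Representation K G V) :
    Subgroup (GL ι K) :=
  ((LinearMap.toMatrixAlgEquiv b : End K V →* Matrix ι ι K).comp ρ).toHomUnits.range

section NaturalRepresentation

variable {n K : Type*} [Fintype n] [DecidableEq n] [Field K] {H : Subgroup (GL n K)}

theorem isIrreducible_naturalRepresentation [Nonempty n]
    (hspan : Submodule.span K (Units.val '' (H : Set (GL n K))) = ⊤) :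
    (naturalRepresentation H).IsIrreducible := by
  refine isIrreducible_of_span_range_eq_top ?_
  have hrange : Set.range (naturalRepresentation H) =
      (toLinAlgEquiv' (R := K) (n := n)).toLinearMap '' (Units.val '' (H : Set (GL n K))) := by
    ext f
    simp [naturalRepresentation]
  rw [hrange, ← Submodule.map_span, hspan, Submodule.map_top, LinearMap.range_eq_top]
  exact toLinAlgEquiv'.surjective

theorem exists_naturalRepresentation_apply_ne (hH : H ≠ ⊥) :
    ∃ (h : H) (w : n → K), naturalRepresentation H h w ≠ w := by
  obtain ⟨h, hh, hh_ne⟩ := H.bot_or_exists_ne_one.resolve_left hH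
  by_contra! hfix
  refine hh_ne (Units.ext (toLinAlgEquiv'.injective (LinearMap.ext fun w ↦ ?_)))
  exact (hfix ⟨h, hh⟩ w).trans (LinearMap.congr_fun (map_one toLinAlgEquiv') w).symm

end NaturalRepresentation

section Basis

variable {ι G K V : Type*} [Fintype ι] [DecidableEq ι] [Field K] [AddCommGroup V] [Module K V]

theorem rank_toMatrix_sub_one_add_finrank_ker (b : Basis ι K V) (f : End K V) :
    (LinearMap.toMatrixAlgEquiv b f - 1).rank + finrank K (LinearMap.ker (f - 1)) =
      Fintype.card ι := by
  have := b.finiteDimensional_of_finite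
  have hsub : toLin b b (LinearMap.toMatrixAlgEquiv b f - 1) = f - 1 := by
    rw [← map_one (LinearMap.toMatrixAlgEquiv b), ← map_sub]
    exact toLin_toMatrix b b (f - 1)
  rw [rank_eq_finrank_range_toLin _ b b, hsub, LinearMap.finrank_range_add_finrank_ker,
    finrank_eq_card_basis b]

theorem rank_sub_one_add_finrank_ker_naturalRepresentation {H : Subgroup (GL ι K)} (h : H) :
    (h.1.val - 1).rank + finrank K (LinearMap.ker (naturalRepresentation H h - 1)) =
      Fintype.card ι := by
  have hmatrix : LinearMap.toMatrixAlgEquiv (Pi.basisFun K ι) (naturalRepresentation H h) = h.1 :=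
    LinearMap.toMatrixAlgEquiv'_toLinAlgEquiv' h.1.val
  rw [← rank_toMatrix_sub_one_add_finrank_ker (Pi.basisFun K ι), hmatrix]

theorem span_matrixGroup_eq_top [Group G] (b : Basis ι K V) {ρ : Representation K G V}
    (hspan : Submodule.span K (Set.range ρ) = ⊤) :
    Submodule.span K (Units.val '' (matrixGroup b ρ : Set (GL ι K))) = ⊤ := by
  have hrange : Units.val '' (matrixGroup b ρ : Set (GL ι K)) =
      (LinearMap.toMatrixAlgEquiv b).toLinearMap '' Set.range ρ := by
    ext A
    simp [matrixGroup]
  rw [hrange, ← Submodule.map_span, hspan, Submodule.map_top, LinearMap.range_eq_top]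
  exact (LinearMap.toMatrixAlgEquiv b).surjective

theorem matrixGroup_ne_bot [Group G] (b : Basis ι K V) {ρ : Representation K G V} {g : G}
    (hg : ρ g ≠ 1) : matrixGroup b ρ ≠ ⊥ := by
  intro hbot
  have hone := (Subgroup.eq_bot_iff_forall _).1 hbot _ ⟨g, rfl⟩
  exact hg ((LinearMap.toMatrixAlgEquiv b).injective
    ((congrArg Units.val hone).trans (map_one _).symm))

theorem exists_finite_field_finrank_ker_le [Group G] (b : Basis ι K V) {ρ : Representation K G V}
    (hspan : Submodule.span K (Set.range ρ) = ⊤) {g₀ : G} (hg₀ : ρ g₀ ≠ 1) :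
    ∃ (F : Type) (_ : Field F) (_ : Finite F) (H : Subgroup (GL ι F)),
      Submodule.span F (Units.val '' (H : Set (GL ι F))) = ⊤ ∧ H ≠ ⊥ ∧
        ∀ h, ∃ g, finrank K (LinearMap.ker (ρ g - 1)) ≤
          finrank F (LinearMap.ker (naturalRepresentation H h - 1)) := by
  obtain ⟨F, _, _, H, hH_span, hH_ne, hrank⟩ :=
    exists_finite_field_specialization (span_matrixGroup_eq_top b hspan) (matrixGroup_ne_bot b hg₀)
  refine ⟨F, inferInstance, inferInstance, H, hH_span, hH_ne, fun h ↦ ?_⟩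
  obtain ⟨_, ⟨g, rfl⟩, hle⟩ := hrank h h.2
  have hle : (h.1.val - 1).rank ≤ (LinearMap.toMatrixAlgEquiv b (ρ g) - 1).rank := hle
  have hker_g := rank_toMatrix_sub_one_add_finrank_ker b (ρ g)
  have hker_h := rank_sub_one_add_finrank_ker_naturalRepresentation h
  exact ⟨g, by omega⟩

end Basis

end MatrixGroup

section Tower

variable {k K V : Type*} [Field k] [Field K] [Algebra k K] [AddCommGroup V] [Module k V]
  [Module K V] [IsScalarTower k K V]

theorem finrank_mul_finrank_ker {f : End K V} {f' : End k V} (hf : ∀ v, f v = f' v) :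
    finrank k K * finrank K (LinearMap.ker f) = finrank k (LinearMap.ker f') := by
  have hker : LinearMap.ker f' = (LinearMap.ker f).restrictScalars k := by
    ext v
    rw [Submodule.restrictScalars_mem, LinearMap.mem_ker, LinearMap.mem_ker, hf]
  rw [hker]
  exact finrank_mul_finrank k K (LinearMap.ker f)

theorem mul_finrank_ker_le_mul_finrank {f : End K V} {f' : End k V} (hf : ∀ v, f v = f' v)
    {a b : ℕ} (h : a * finrank K (LinearMap.ker f) ≤ b * finrank K V) :
    a * finrank k (LinearMap.ker f') ≤ b * finrank k V := by
  rw [← finrank_mul_finrank_ker hf, ← finrank_mul_finrank k K V, mul_left_comm, mul_left_comm b]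
  exact Nat.mul_le_mul_left _ h

end Tower

theorem stmt_12_general {a b : ℕ}
    (hfin : ∀ (H : Type) [Group H] [Finite H] (F : Type) [Field F] [Finite F]
      (W : Type) [AddCommGroup W] [Module F W] [FiniteDimensional F W] (σ : Representation F H W),
      (∀ U : Submodule F W, (∀ h, ∀ w ∈ U, σ h w ∈ U) → U = ⊥ ∨ U = ⊤) →
      (∃ h w, σ h w ≠ w) →
      ∃ h, a * finrank F (LinearMap.ker (σ h - 1)) ≤ b * finrank F W)
    {G k V : Type*} [Group G] [Field k] [AddCommGroup V] [Module k V] [FiniteDimensional k V]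
    {ρ : Representation k G V}
    (hirr : ∀ W : Submodule k V, (∀ g, ∀ v ∈ W, ρ g v ∈ W) → W = ⊥ ∨ W = ⊤)
    (hnt : ∃ g v, ρ g v ≠ v) :
    ∃ g, a * finrank k (LinearMap.ker (ρ g - 1)) ≤ b * finrank k V := by
  obtain ⟨g₀, v₀, hv₀⟩ := hnt
  have : Nontrivial V := ⟨ρ g₀ v₀, v₀, hv₀⟩
  obtain ⟨K, _, _, _, _, ρ', hρ', hspan⟩ :=
    exists_field_span_range_eq_top (isIrreducible_iff_forall_submodule.2 ⟨this, hirr⟩)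
  have : FiniteDimensional K V := Module.Finite.of_restrictScalars_finite k K V
  have hg₀ : ρ' g₀ ≠ 1 := fun h ↦ hv₀ (by rw [← hρ', h, End.one_apply])
  obtain ⟨F, _, _, H, hH_span, hH_ne, hker⟩ :=
    exists_finite_field_finrank_ker_le (finBasis K V) hspan hg₀
  have : Nonempty (Fin (finrank K V)) := Fin.pos_iff_nonempty.1 finrank_pos
  obtain ⟨h, hh⟩ := hfin H F (Fin (finrank K V) → F) (naturalRepresentation H)
    (isIrreducible_iff_forall_submodule.1 (isIrreducible_naturalRepresentation hH_span)).2
    (exists_naturalRepresentation_apply_ne hH_ne)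
  obtain ⟨g, hg⟩ := hker h
  rw [finrank_fin_fun] at hh
  have hsub (v : V) : (ρ' g - 1) v = (ρ g - 1) v := congrArg (· - v) (hρ' g v)
  exact ⟨g, mul_finrank_ker_le_mul_finrank hsub ((Nat.mul_le_mul_left a hg).trans hh)⟩

/-- Extension of Neumann's conjecture to arbitrary (possibly infinite) linear
groups: assuming the result for finite groups, any group acting irreducibly and
nontrivially on a finite dimensional vector space contains an element whose
fixed space has dimension at most `(1/3) dim V`. -/
theorem stmt_12
    (hfin : ∀ (H : Type) [Group H] [Finite H],
      ∀ (k : Type) [Field k],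
      ∀ (W : Type) [AddCommGroup W] [Module k W] [FiniteDimensional k W],
      ∀ σ : Representation k H W,
      (∀ U : Submodule k W, (∀ h : H, ∀ w ∈ U, σ h w ∈ U) → U = ⊥ ∨ U = ⊤) →
      (∃ (h : H) (w : W), σ h w ≠ w) →
      ∃ h : H, 3 * Module.finrank k (LinearMap.ker (σ h - 1)) ≤ Module.finrank k W)
    (G : Type) [Group G] (k : Type) [Field k]
    (V : Type) [AddCommGroup V] [Module k V] [FiniteDimensional k V]
    (ρ : Representation k G V)
    (hirr : ∀ W : Submodule k V, (∀ g : G, ∀ v ∈ W, ρ g v ∈ W) → W = ⊥ ∨ W = ⊤)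
    (hnt : ∃ (g : G) (v : V), ρ g v ≠ v) :
    ∃ g : G, 3 * Module.finrank k (LinearMap.ker (ρ g - 1)) ≤ Module.finrank k V := by
  simpa only [one_mul] using stmt_12_general (a := 3) (b := 1)
    (fun H _ _ F _ _ W _ _ _ σ ↦ by simpa only [one_mul] using hfin H F W σ) hirr hnt
end

section
/- Let L = A₅ and let W be the irreducible 5-dimensional complex representation of L. For m ≥ 1 let G(m) = L^m act on V(m) = W^{⊗m} (the m-fold outer tensor product). Then for every g ∈ G(m), dim C_{V(m)}(g) > (1/50) dim V(m). -/
open scoped TensorProduct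

/-!
The dimension of the fixed space of `g` is the average of the traces of `g ^ k` over `k` modulo
`30`, and the trace on an outer tensor product is the product of the characters `χ` of the factors.

The only facts about `χ` that are needed are irreducibility and degree 5. Elements of `A₅` are
conjugate to their inverses, so `χ` is real and `∑ χ(g)² = 60`. On the 15 elements of order 2 it is
an odd integer, and on the 20 elements of order 3 an integer congruent to 2 modulo 3, so its squares
there are at least 1; as `25 + 15 + 20 = 60`, they equal 1 and `χ` vanishes on elements of order 5.
Then `χ = -1` on elements of order 3, and `∑ χ(g) ≥ 0` forces `χ = 1` on those of order 2.

If `g` has `a`, `b`, `c`, `d` components of order 1, 2, 3, 5, the sum of the traces over `k` modulo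
`30` factors as `5 ^ a * (5 ^ b + 1) * (5 ^ c + 2 * (-1) ^ c) * (5 ^ d + 4 * 0 ^ d)`. Its worst
factor is the third one at `c = 1`, which equals `(3 / 5) * 5 ^ c`; the average therefore exceeds
`(3 / 5) / 30 = 1 / 50` of the dimension.
-/

section Traces

open Finset LinearMap Module

theorem sum_trace_pow_eq_mul_finrank_ker_sub_id {K V : Type*} [Field K] [AddCommGroup V]
    [Module K V] [FiniteDimensional K V] (T : V →ₗ[K] V) {n : ℕ} (hn : (n : K) ≠ 0)
    (hT : T ^ n = 1) :
    ∑ k ∈ range n, trace K V (T ^ k) = n * (finrank K (ker (T - LinearMap.id)) : K) := by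
  have hproj : IsProj (ker (T - LinearMap.id)) ((n : K)⁻¹ • ∑ k ∈ range n, T ^ k) := by
    refine ⟨fun v => ?_, fun v hv => ?_⟩
    · have hgeom : (T - LinearMap.id) ∘ₗ ∑ k ∈ range n, T ^ k = 0 :=
        (mul_geom_sum T n).trans (sub_eq_zero.mpr hT)
      rw [mem_ker, LinearMap.smul_apply, map_smul, ← comp_apply, hgeom, LinearMap.zero_apply,
        smul_zero]
    · have hfix : T v = v := by simpa [sub_eq_zero] using hv
      have hfix_pow (k : ℕ) : (T ^ k) v = v := by
        rw [Module.End.pow_apply, Function.iterate_fixed hfix]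
      simp only [LinearMap.smul_apply, LinearMap.sum_apply, hfix_pow, sum_const, card_range]
      rw [← Nat.cast_smul_eq_nsmul K, inv_smul_smul₀ hn]
  rw [← hproj.trace, map_smul, map_sum, smul_eq_mul, mul_inv_cancel_left₀ hn]

theorem trace_piTensorProduct_map {R ι : Type*} {M : ι → Type*} [CommRing R] [Fintype ι]
    [∀ i, AddCommGroup (M i)] [∀ i, Module R (M i)] [∀ i, Module.Free R (M i)]
    [∀ i, Module.Finite R (M i)] (f : ∀ i, M i →ₗ[R] M i) :
    trace R _ (PiTensorProduct.map f) = ∏ i, trace R (M i) (f i) := by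
  classical
  let b (i : ι) := Free.chooseBasis R (M i)
  simp_rw [trace_eq_matrix_trace R (Basis.piTensorProduct b),
    fun i => trace_eq_matrix_trace R (b i), Matrix.trace, Matrix.diag, toMatrix_apply,
    prod_univ_sum, Fintype.piFinset_univ, Basis.piTensorProduct_apply, PiTensorProduct.map_tprod,
    Basis.piTensorProduct_repr_tprod_apply]

theorem finrank_piTensorProduct {R ι : Type*} {M : ι → Type*} [CommRing R] [Nontrivial R]
    [Fintype ι] [∀ i, AddCommGroup (M i)] [∀ i, Module R (M i)] [∀ i, Module.Free R (M i)]
    [∀ i, Module.Finite R (M i)] :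
    finrank R (⨂[R] i, M i) = ∏ i, finrank R (M i) := by
  classical
  rw [finrank_eq_card_basis (Basis.piTensorProduct fun i => Free.chooseBasis R (M i)),
    Fintype.card_pi]
  simp_rw [finrank_eq_card_chooseBasisIndex]

end Traces

section Characters

open Finset LinearMap Module

variable {G : Type*} [Group G]

theorem card_filter_orderOf_eq_prime [Fintype G] [DecidableEq G] (p : ℕ) [Fact p.Prime] :
    #{g : G | orderOf g = p} = #{g : G | g ^ p = 1 ∧ g ≠ 1} := by
  simp only [orderOf_eq_prime_iff]

open scoped ComplexOrder in
-- Averaging the standard Hermitian form over `G` makes the action unitary.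
theorem character_inv_eq_star {𝕜 V : Type*} [RCLike 𝕜] [Finite G] [AddCommGroup V] [Module 𝕜 V]
    [FiniteDimensional 𝕜 V] (ρ : Representation 𝕜 G V) (g : G) :
    ρ.character g⁻¹ = star (ρ.character g) := by
  have := Fintype.ofFinite G
  let A (h : G) := toMatrix (finBasis 𝕜 V) (finBasis 𝕜 V) (ρ h)
  have hA_mul (h₁ h₂ : G) : A (h₁ * h₂) = A h₁ * A h₂ := by
    simp only [A, map_mul, toMatrix_mul]
  have hA_inv (h : G) : A h * A h⁻¹ = 1 := by
    rw [← hA_mul, mul_inv_cancel]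
    simp only [A, map_one, toMatrix_one]
  let H := ∑ h, (A h).conjTranspose * A h
  have hH_posDef : H.PosDef := Matrix.posDef_sum univ_nonempty fun h _ =>
    .conjTranspose_mul_self _ (Matrix.mulVec_injective_of_isUnit (.of_mul_eq_one _ (hA_inv h)))
  have hH_invariant : (A g).conjTranspose * H * A g = H := by
    simp only [H, mul_sum, sum_mul]
    refine Fintype.sum_equiv (Equiv.mulRight g) _ _ fun h => ?_
    simp only [Equiv.coe_mulRight, hA_mul, Matrix.conjTranspose_mul, mul_assoc]
  have hadjoint : H * A g⁻¹ = (A g).conjTranspose * H := by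
    conv_lhs => rw [← hH_invariant, mul_assoc, hA_inv, mul_one]
  have htrace (h : G) : ρ.character h = (A h).trace := trace_eq_matrix_trace 𝕜 _ _
  obtain ⟨u, hu⟩ := hH_posDef.isUnit
  rw [htrace, htrace, ← Matrix.trace_conjTranspose, ← Matrix.trace_units_conj u, hu, hadjoint,
    ← hu, Units.mul_inv_cancel_right]

theorem character_eq_re_of_isConj_inv {V : Type*} [Finite G] [AddCommGroup V] [Module ℂ V]
    [FiniteDimensional ℂ V] (ρ : Representation ℂ G V) {g : G} (hg : IsConj g g⁻¹) :
    ρ.character g = (ρ.character g).re := by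
  obtain ⟨h, hh⟩ := isConj_iff.mp hg
  have hinv : ρ.character g⁻¹ = ρ.character g := by rw [← hh, ρ.char_conj]
  exact (Complex.conj_eq_iff_re.mp ((character_inv_eq_star ρ g).symm.trans hinv)).symm

variable {K V : Type*} [Field K] [AddCommGroup V] [Module K V]

theorem isIrreducible_of_forall_invariant [Nontrivial V] {ρ : Representation K G V}
    (h : ∀ U : Submodule K V, (∀ g, ∀ v ∈ U, ρ g v ∈ U) → U = ⊥ ∨ U = ⊤) :
    ρ.IsIrreducible where
  exists_pair_ne :=
    ⟨⊥, ⊤, fun hbt => bot_ne_top (α := Submodule K V)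
      (congrArg Subrepresentation.toSubmodule hbt)⟩
  eq_bot_or_eq_top U := (h U.toSubmodule fun g _ hv => U.apply_mem_toSubmodule g hv).imp
    (fun hU => Subrepresentation.toSubmodule_injective hU)
    (fun hU => Subrepresentation.toSubmodule_injective hU)

variable [CharZero K] [FiniteDimensional K V] (ρ : Representation K G V)

theorem sum_character_mul_character_inv [Fintype G] [IsAlgClosed K] [ρ.IsIrreducible] :
    ∑ g, ρ.character g * ρ.character g⁻¹ = Nat.card G := by
  have hcard : (Nat.card G : K) ≠ 0 := Nat.cast_ne_zero.mpr Nat.card_pos.ne'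
  have := invertibleOfNonzero hcard
  have horth := ρ.char_orthonormal ρ
  rw [if_pos ⟨.refl ρ⟩] at horth
  exact (inv_mul_eq_one₀ hcard).mp horth |>.symm

theorem sum_character_eq_card_mul_finrank_invariants [Fintype G] :
    ∑ g, ρ.character g = Nat.card G * finrank K ρ.invariants := by
  have hcard : (Nat.card G : K) ≠ 0 := Nat.cast_ne_zero.mpr Nat.card_pos.ne'
  have := invertibleOfNonzero hcard
  exact (inv_mul_eq_iff_eq_mul₀ hcard).mp ρ.card_inv_mul_sum_char_eq_finrank

theorem exists_sum_pow_mul_character_pow_eq {g : G} {c : K} {n : ℕ} (hn : n ≠ 0)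
    (hg : g ^ n = 1) (hc : c ^ n = 1) :
    ∃ d : ℕ, ∑ k ∈ range n, c ^ k * ρ.character (g ^ k) = n * d := by
  have hpow : (c • ρ g) ^ n = 1 := by rw [smul_pow, ← map_pow, hg, hc, map_one, one_smul]
  refine ⟨_, .trans (sum_congr rfl fun k _ => ?_)
    (sum_trace_pow_eq_mul_finrank_ker_sub_id (c • ρ g) (Nat.cast_ne_zero.mpr hn) hpow)⟩
  rw [smul_pow, map_smul, smul_eq_mul, ← map_pow, Representation.character]

theorem exists_character_eq_of_orderOf_eq_two {g : G} (hg : orderOf g = 2) :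
    ∃ d : ℕ, ρ.character g = 2 * d - finrank K V := by
  obtain ⟨d, hd⟩ := exists_sum_pow_mul_character_pow_eq ρ two_ne_zero
    (hg ▸ pow_orderOf_eq_one g) (one_pow 2)
  simp only [sum_range_succ, sum_range_zero, pow_zero, pow_one, one_mul,
    Representation.char_one, Nat.cast_ofNat] at hd
  exact ⟨d, by linear_combination hd⟩

theorem exists_character_eq_of_orderOf_eq_three {ω : K} (hω : IsPrimitiveRoot ω 3) {g : G}
    (hg : orderOf g = 3) (hconj : IsConj g g⁻¹) :
    ∃ d : ℕ, ρ.character g = finrank K V - 3 * d := by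
  have hg_pow : g ^ 3 = 1 := hg ▸ pow_orderOf_eq_one g
  have hsq : ρ.character (g ^ 2) = ρ.character g := by
    obtain ⟨h, hh⟩ := isConj_iff.mp hconj
    rw [eq_inv_of_mul_eq_one_left ((pow_succ g 2).symm.trans hg_pow), ← hh, ρ.char_conj]
  obtain ⟨d, hd⟩ := exists_sum_pow_mul_character_pow_eq ρ three_ne_zero hg_pow hω.pow_eq_one
  have hω_sum := hω.geom_sum_eq_zero (by norm_num)
  simp only [sum_range_succ, sum_range_zero, pow_zero, pow_one, one_mul, hsq,
    Representation.char_one, Nat.cast_ofNat] at hd hω_sum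
  exact ⟨d, by linear_combination ρ.character g * hω_sum - hd⟩

end Characters

namespace AlternatingGroupFive

open Finset LinearMap Module

theorem isConj_inv : ∀ g : alternatingGroup (Fin 5), IsConj g g⁻¹ := by
  simp only [isConj_iff, mul_inv_eq_iff_eq_mul]
  decide +kernel

theorem orderOf_mem (g : alternatingGroup (Fin 5)) : orderOf g ∈ ({1, 2, 3, 5} : Finset ℕ) := by
  have hpow : ∀ g : alternatingGroup (Fin 5), g ^ 2 = 1 ∨ g ^ 3 = 1 ∨ g ^ 5 = 1 := by
    decide +kernel
  obtain ⟨p, hp, hp_mem, hdvd⟩ : ∃ p, p.Prime ∧ p ∈ ({1, 2, 3, 5} : Finset ℕ) ∧ orderOf g ∣ p := by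
    rcases hpow g with h | h | h
    · exact ⟨2, Nat.prime_two, by decide, orderOf_dvd_of_pow_eq_one h⟩
    · exact ⟨3, Nat.prime_three, by decide, orderOf_dvd_of_pow_eq_one h⟩
    · exact ⟨5, Nat.prime_five, by decide, orderOf_dvd_of_pow_eq_one h⟩
  rcases (Nat.dvd_prime hp).mp hdvd with h | h
  · simp [h]
  · rwa [h]

theorem sum_comp_orderOf {M : Type*} [AddCommMonoid M] (f : ℕ → M) :
    ∑ g : alternatingGroup (Fin 5), f (orderOf g) = f 1 + 15 • f 2 + 20 • f 3 + 24 • f 5 := by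
  have := Fact.mk Nat.prime_five
  have h₁ : #{g : alternatingGroup (Fin 5) | orderOf g = 1} = 1 := by
    simp only [orderOf_eq_one_iff]
    decide +kernel
  have h₂ : #{g : alternatingGroup (Fin 5) | orderOf g = 2} = 15 := by
    rw [card_filter_orderOf_eq_prime]
    decide +kernel
  have h₃ : #{g : alternatingGroup (Fin 5) | orderOf g = 3} = 20 := by
    rw [card_filter_orderOf_eq_prime]
    decide +kernel
  have h₅ : #{g : alternatingGroup (Fin 5) | orderOf g = 5} = 24 := by
    rw [card_filter_orderOf_eq_prime]
    decide +kernel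
  rw [← sum_fiberwise_of_maps_to' (fun g _ => orderOf_mem g)]
  simp only [sum_const]
  rw [sum_insert (by decide), sum_insert (by decide), sum_insert (by decide), sum_singleton, h₁, h₂,
    h₃, h₅, one_nsmul, add_assoc, add_assoc]

theorem prod_comp_orderOf {ι M : Type*} [Fintype ι] [CommMonoid M] (f : ℕ → M)
    (g : ι → alternatingGroup (Fin 5)) :
    ∏ i, f (orderOf (g i)) =
      f 1 ^ #{i | orderOf (g i) = 1} * f 2 ^ #{i | orderOf (g i) = 2} *
        f 3 ^ #{i | orderOf (g i) = 3} * f 5 ^ #{i | orderOf (g i) = 5} := by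
  rw [← prod_fiberwise_of_maps_to' (fun i _ => orderOf_mem (g i))]
  simp [prod_const, mul_assoc]

/-- The value of the irreducible character of degree `5` of `A₅` on the elements of order `n`;
it is set to `0` if there are none. -/
def characterValue : ℕ → ℤ
  | 1 => 5
  | 2 => 1
  | 3 => -1
  | _ => 0

theorem characterValue_orderOf_pow (g : alternatingGroup (Fin 5)) (k : ℕ) :
    characterValue (orderOf (g ^ k)) =
      if orderOf g ∣ k then 5 else characterValue (orderOf g) := by
  split_ifs with hdvd
  · rw [orderOf_dvd_iff_pow_eq_one.mp hdvd, orderOf_one, characterValue]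
  · have hcoprime : (orderOf g).Coprime k := by
      have hmem := orderOf_mem g
      simp only [mem_insert, mem_singleton] at hmem
      rcases hmem with h | h | h | h <;> rw [h] at hdvd ⊢
      · exact Nat.coprime_one_left k
      · exact (Nat.prime_two.coprime_iff_not_dvd).mpr hdvd
      · exact (Nat.prime_three.coprime_iff_not_dvd).mpr hdvd
      · exact (Nat.prime_five.coprime_iff_not_dvd).mpr hdvd
    rw [hcoprime.orderOf_pow]

theorem sq_characterValue_le_sq_re_character {V : Type*} [AddCommGroup V] [Module ℂ V]
    [FiniteDimensional ℂ V] (ρ : Representation ℂ (alternatingGroup (Fin 5)) V)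
    (hdim : finrank ℂ V = 5) (g : alternatingGroup (Fin 5)) :
    (characterValue (orderOf g) : ℝ) ^ 2 ≤ (ρ.character g).re ^ 2 ∧
      ((characterValue (orderOf g) : ℝ) ^ 2 = (ρ.character g).re ^ 2 →
        (ρ.character g).re ≤ characterValue (orderOf g)) := by
  have hmem := orderOf_mem g
  simp only [mem_insert, mem_singleton] at hmem
  rcases hmem with h | h | h | h
  · rw [h, orderOf_eq_one_iff.mp h, ρ.char_one, hdim]
    norm_num [characterValue]
  · obtain ⟨n, hre, hn⟩ : ∃ n : ℤ, (ρ.character g).re = n ∧ n % 2 = 1 := by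
      obtain ⟨d, hd⟩ := exists_character_eq_of_orderOf_eq_two ρ h
      exact ⟨2 * d - 5, by rw [hd, hdim]; norm_num, by lia⟩
    have hn_pos : 0 < n ^ 2 := sq_pos_of_ne_zero (by lia)
    simp only [h, hre, characterValue, Int.cast_one, one_pow]
    norm_cast
    exact ⟨hn_pos, fun hsq => by nlinarith⟩
  · obtain ⟨n, hre, hn⟩ : ∃ n : ℤ, (ρ.character g).re = n ∧ n % 3 = 2 := by
      obtain ⟨d, hd⟩ := exists_character_eq_of_orderOf_eq_three ρ
        (Complex.isPrimitiveRoot_exp 3 (by norm_num)) h (isConj_inv g)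
      exact ⟨5 - 3 * d, by rw [hd, hdim]; norm_num, by lia⟩
    have hn_pos : 0 < n ^ 2 := sq_pos_of_ne_zero (by lia)
    simp only [h, hre, characterValue]
    norm_cast
    refine ⟨by lia, fun hsq => ?_⟩
    rcases sq_eq_sq_iff_eq_or_eq_neg.mp hsq with heq | heq <;> lia
  · simp only [h, characterValue, Int.cast_zero, zero_pow two_ne_zero]
    exact ⟨sq_nonneg _, fun hsq => (pow_eq_zero_iff two_ne_zero |>.mp hsq.symm).le⟩

theorem character_eq_characterValue_orderOf {V : Type*} [AddCommGroup V] [Module ℂ V]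
    (ρ : Representation ℂ (alternatingGroup (Fin 5)) V) [ρ.IsIrreducible]
    (hdim : finrank ℂ V = 5) (g : alternatingGroup (Fin 5)) :
    ρ.character g = characterValue (orderOf g) := by
  have : FiniteDimensional ℂ V := finite_of_finrank_pos (by rw [hdim]; norm_num)
  let χ (g : alternatingGroup (Fin 5)) : ℝ := (ρ.character g).re
  let v (g : alternatingGroup (Fin 5)) : ℝ := characterValue (orderOf g)
  have hχ (g) : ρ.character g = χ g := character_eq_re_of_isConj_inv ρ (isConj_inv g)
  have hχ_inv (g) : ρ.character g⁻¹ = χ g := by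
    rw [character_inv_eq_star, hχ, ← starRingEnd_apply, Complex.conj_ofReal]
  have hcard : Nat.card (alternatingGroup (Fin 5)) = 60 := by
    rw [nat_card_alternatingGroup, Nat.card_fin]
    rfl
  have hsum_sq : ∑ g, v g ^ 2 = ∑ g, χ g ^ 2 := by
    have hχ_sum := sum_character_mul_character_inv ρ
    simp only [hχ_inv, hcard] at hχ_sum
    simp only [hχ, ← sq] at hχ_sum
    have hv_sum := sum_comp_orderOf fun n => (characterValue n : ℝ) ^ 2
    norm_num [characterValue] at hv_sum
    exact hv_sum.trans (by exact_mod_cast hχ_sum.symm)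
  have hsum : ∑ g, v g ≤ ∑ g, χ g := by
    have hχ_sum := sum_character_eq_card_mul_finrank_invariants ρ
    simp only [hχ, hcard] at hχ_sum
    have hv_sum := sum_comp_orderOf fun n => (characterValue n : ℝ)
    norm_num [characterValue] at hv_sum
    have hχ_sum_real : ∑ g, χ g = 60 * finrank ℂ ρ.invariants := by exact_mod_cast hχ_sum
    rw [hχ_sum_real]
    exact hv_sum.trans_le (by positivity)
  have hbound := sq_characterValue_le_sq_re_character ρ hdim
  have hsq_eq := (sum_eq_sum_iff_of_le fun g _ => (hbound g).1).mp hsum_sq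
  have hle (g) (hg : g ∈ univ) : χ g ≤ v g := (hbound g).2 (hsq_eq g hg)
  have heq := (sum_eq_sum_iff_of_le hle).mp ((sum_le_sum hle).antisymm hsum) g (mem_univ g)
  rw [hχ, heq]
  exact Complex.ofReal_intCast _

-- By the Chinese remainder theorem, the residues of `k` modulo 2, 3 and 5 are independent.
theorem sum_range_thirty_ite_dvd {R : Type*} [CommSemiring R] (a a' b b' c c' : R) :
    ∑ k ∈ range 30, (if 2 ∣ k then a else a') * (if 3 ∣ k then b else b') *
        (if 5 ∣ k then c else c') =
      (a + a') * (b + 2 * b') * (c + 4 * c') := by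
  simp only [sum_range_succ, sum_range_zero]
  norm_num
  ring

theorem three_mul_five_pow_lt (a b c d : ℕ) :
    (3 * (5 ^ a * 5 ^ b * 5 ^ c * 5 ^ d) : ℤ) <
      5 * (5 ^ a * ((5 ^ b + 1) * (5 ^ c + 2 * (-1) ^ c) * (5 ^ d + 4 * 0 ^ d))) := by
  have h₂ : (5 ^ b : ℤ) < 5 ^ b + 1 := lt_add_one _
  have h₃ : (3 * 5 ^ c : ℤ) ≤ 5 * (5 ^ c + 2 * (-1) ^ c) := by
    rcases c.even_or_odd with hc | hc
    · rw [hc.neg_one_pow]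
      linarith [pow_pos (show (0 : ℤ) < 5 by norm_num) c]
    · rw [hc.neg_one_pow]
      linarith [le_self_pow₀ (show (1 : ℤ) ≤ 5 by norm_num) hc.pos.ne']
  have h₅ : (5 ^ d : ℤ) ≤ 5 ^ d + 4 * 0 ^ d := le_add_of_nonneg_right (by positivity)
  calc (3 * (5 ^ a * 5 ^ b * 5 ^ c * 5 ^ d) : ℤ)
      = 5 ^ a * (5 ^ b * (3 * 5 ^ c) * 5 ^ d) := by ring
    _ < 5 ^ a * ((5 ^ b + 1) * (3 * 5 ^ c) * 5 ^ d) := by gcongr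
    _ ≤ 5 ^ a * ((5 ^ b + 1) * (5 * (5 ^ c + 2 * (-1) ^ c)) * (5 ^ d + 4 * 0 ^ d)) := by
      gcongr
      exact mul_nonneg (by positivity) (le_trans (by positivity) h₃)
    _ = _ := by ring

theorem three_mul_five_pow_card_lt_sum_prod_characterValue {ι : Type*} [Fintype ι]
    (g : ι → alternatingGroup (Fin 5)) :
    3 * 5 ^ Fintype.card ι <
      5 * ∑ k ∈ range 30, ∏ i, characterValue (orderOf (g i ^ k)) := by
  let r (n : ℕ) := #{i | orderOf (g i) = n}
  have hcard : (5 : ℤ) ^ Fintype.card ι = 5 ^ r 1 * 5 ^ r 2 * 5 ^ r 3 * 5 ^ r 5 := by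
    rw [← prod_comp_orderOf (fun _ => (5 : ℤ)) g, prod_const, card_univ]
  have hprod (k : ℕ) : ∏ i, characterValue (orderOf (g i ^ k)) =
      5 ^ r 1 * ((if 2 ∣ k then 5 ^ r 2 else 1) * (if 3 ∣ k then 5 ^ r 3 else (-1) ^ r 3) *
        (if 5 ∣ k then 5 ^ r 5 else 0 ^ r 5)) := by
    simp only [characterValue_orderOf_pow]
    rw [prod_comp_orderOf (fun n => if n ∣ k then 5 else characterValue n) g]
    simp only [one_dvd, if_true, ite_pow, characterValue, one_pow, mul_assoc, r]
  rw [hcard, sum_congr rfl fun k _ => hprod k, ← mul_sum, sum_range_thirty_ite_dvd]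
  exact three_mul_five_pow_lt _ _ _ _

theorem pow_thirty_eq_one (g : alternatingGroup (Fin 5)) : g ^ 30 = 1 :=
  orderOf_dvd_iff_pow_eq_one.mp <|
    (by decide : ∀ n ∈ ({1, 2, 3, 5} : Finset ℕ), n ∣ 30) _ (orderOf_mem g)

theorem thirty_mul_finrank_ker_map_sub_id {ι : Type*} [Fintype ι] {W : ι → Type*}
    [∀ i, AddCommGroup (W i)] [∀ i, Module ℂ (W i)]
    (ρ : ∀ i, Representation ℂ (alternatingGroup (Fin 5)) (W i)) [∀ i, (ρ i).IsIrreducible]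
    (hdim : ∀ i, finrank ℂ (W i) = 5) (g : ι → alternatingGroup (Fin 5)) :
    (30 * finrank ℂ (ker (PiTensorProduct.map (fun i => ρ i (g i)) - LinearMap.id)) : ℤ) =
      ∑ k ∈ range 30, ∏ i, characterValue (orderOf (g i ^ k)) := by
  have (i : ι) : FiniteDimensional ℂ (W i) := finite_of_finrank_pos (by rw [hdim]; norm_num)
  have hpow (k : ℕ) : PiTensorProduct.map (fun i => ρ i (g i)) ^ k =
      PiTensorProduct.map fun i => ρ i (g i ^ k) := by
    simp only [map_pow]
    exact (PiTensorProduct.map_pow _ k).symm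
  have hpow_thirty : PiTensorProduct.map (fun i => ρ i (g i)) ^ 30 = 1 := by
    simp only [hpow, pow_thirty_eq_one, map_one, PiTensorProduct.map_one]
  have htrace (k : ℕ) : trace ℂ _ (PiTensorProduct.map (fun i => ρ i (g i)) ^ k) =
      ((∏ i, characterValue (orderOf (g i ^ k)) : ℤ) : ℂ) := by
    rw [hpow, trace_piTensorProduct_map, Int.cast_prod]
    exact prod_congr rfl fun i _ => character_eq_characterValue_orderOf (ρ i) (hdim i) (g i ^ k)
  have hfixed := sum_trace_pow_eq_mul_finrank_ker_sub_id _ (by norm_num) hpow_thirty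
  simp only [htrace] at hfixed
  exact_mod_cast hfixed.symm

end AlternatingGroupFive

theorem stmt_13_general {ι : Type*} [Finite ι] {W : ι → Type*} [∀ i, AddCommGroup (W i)]
    [∀ i, Module ℂ (W i)] (ρ : ∀ i, Representation ℂ (alternatingGroup (Fin 5)) (W i))
    [∀ i, (ρ i).IsIrreducible] (hdim : ∀ i, Module.finrank ℂ (W i) = 5)
    (g : ι → alternatingGroup (Fin 5)) :
    Module.finrank ℂ (⨂[ℂ] i, W i) <
      50 * Module.finrank ℂ
        (LinearMap.ker (PiTensorProduct.map (fun i => ρ i (g i)) - LinearMap.id)) := by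
  have := Fintype.ofFinite ι
  have (i : ι) : FiniteDimensional ℂ (W i) :=
    Module.finite_of_finrank_pos (by rw [hdim]; norm_num)
  have hfinrank : Module.finrank ℂ (⨂[ℂ] i, W i) = 5 ^ Fintype.card ι := by
    simp only [finrank_piTensorProduct, hdim, Finset.prod_const,
      Finset.card_univ]
  have hlt := AlternatingGroupFive.three_mul_five_pow_card_lt_sum_prod_characterValue g
  rw [← AlternatingGroupFive.thirty_mul_finrank_ker_map_sub_id ρ hdim g] at hlt
  rw [hfinrank]
  zify
  linarith

/-- Let `W` be the irreducible `5`-dimensional complex representation of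
`L = A₅` and `G(m) = L^m` act on `V(m) = W^{⊗m}`. Then every `g ∈ G(m)` has
fixed space of dimension greater than `(1/50) dim V(m)`. -/
theorem stmt_13 (W : Type) [AddCommGroup W] [Module ℂ W] [FiniteDimensional ℂ W]
    (ρ : Representation ℂ (alternatingGroup (Fin 5)) W)
    (hirr : ∀ U : Submodule ℂ W,
      (∀ g : alternatingGroup (Fin 5), ∀ w ∈ U, ρ g w ∈ U) → U = ⊥ ∨ U = ⊤)
    (hdim : Module.finrank ℂ W = 5)
    (m : ℕ) (hm : 1 ≤ m) (g : Fin m → alternatingGroup (Fin 5)) :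
    Module.finrank ℂ (⨂[ℂ] (_ : Fin m), W) <
      50 * Module.finrank ℂ
        (LinearMap.ker
          (PiTensorProduct.map (fun i => (ρ (g i) : W →ₗ[ℂ] W)) - LinearMap.id)) := by
  have : Nontrivial W := Module.nontrivial_of_finrank_pos (R := ℂ) (by rw [hdim]; norm_num)
  have := isIrreducible_of_forall_invariant hirr
  exact stmt_13_general (fun _ => ρ) (fun _ => hdim) g
end

section
/- Let G = A_n with 5 ≤ n ≤ 10. Setting k = 5 for n ∈ {5, 6} and k = 7 for n ∈ {7, 8, 9, 10}, there exist three conjugate k-cycles x, y, z ∈ A_n with xyz = 1 and ⟨x, y⟩ = A_n. -/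
/-!
A transitive group of permutations containing a `p`-cycle, with `p` a prime larger than half the
degree, is primitive: the `p`-cycle acts on its support with prime degree, hence primitively, and
that support fills more than half of the space. By Jordan's theorem a `3`-cycle in such a group
forces it to contain the alternating group.

To make the conjugacy automatic, pick `σ` with `σ ^ 3 = 1` and `(x * σ) ^ 3 = 1`. Then `σ` is even,
and the conjugates `x`, `y = σ * x * σ⁻¹`, `z = σ⁻¹ * x * σ` satisfy `x * y * z = (x * σ) ^ 3 = 1`.
In degree `8` no such `7`-cycles `x` and `y` generate the alternating group, and two unrelated
conjugators are used.
-/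

open Equiv.Perm MulAction Subgroup

section PermutationGroups

variable {α : Type*} [Fintype α] [DecidableEq α] {G : Subgroup (Equiv.Perm α)}

theorem isPreprimitive_of_isCycle_mem_of_card_lt [IsPretransitive G α] {g : Equiv.Perm α}
    (hg : g.IsCycle) (hgG : g ∈ G) (hp : g.support.card.Prime)
    (hcard : Fintype.card α < 2 * g.support.card) : IsPreprimitive G α := by
  let s : Set α := (g.support : Set α)ᶜ
  have card_moved : Nat.card (SubMulAction.ofFixingSubgroup G s) = g.support.card := by
    change Nat.card (sᶜ : Set α) = _
    rw [compl_compl, Nat.card_coe_set_eq, Set.ncard_coe_finset]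
  have : IsPretransitive (fixingSubgroup G s) (SubMulAction.ofFixingSubgroup G s) :=
    isPretransitive_of_isCycle_mem hg hgG
  have : IsPreprimitive (fixingSubgroup G s) (SubMulAction.ofFixingSubgroup G s) :=
    .of_prime_card (card_moved ▸ hp)
  let ι : SubMulAction.ofFixingSubgroup G s →ₑ[(fixingSubgroup G s).subtype] α :=
    { toFun := Subtype.val, map_smul' := fun _ _ ↦ rfl }
  have card_range : (Set.range ι).ncard = g.support.card :=
    (Set.ncard_range_of_injective Subtype.val_injective).trans card_moved
  exact .of_card_lt (f := ι) (by rwa [card_range, Nat.card_eq_fintype_card])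

theorem isPretransitive_of_isCycle_mem_of_support_union {x y : Equiv.Perm α}
    (hx : x.IsCycle) (hy : y.IsCycle) (hxG : x ∈ G) (hyG : y ∈ G)
    (hmeet : (x.support ∩ y.support).Nonempty) (hcover : x.support ∪ y.support = Finset.univ) :
    IsPretransitive G α := by
  obtain ⟨a, ha⟩ := hmeet
  obtain ⟨hax, hay⟩ := Finset.mem_inter.1 ha
  rw [isPretransitive_iff_base a]
  intro b
  have hb : b ∈ x.support ∪ y.support := hcover ▸ Finset.mem_univ b
  rcases Finset.mem_union.1 hb with hbx | hby
  · obtain ⟨i, hi⟩ := hx.exists_zpow_eq (mem_support.1 hax) (mem_support.1 hbx)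
    exact ⟨⟨x ^ i, zpow_mem hxG i⟩, hi⟩
  · obtain ⟨i, hi⟩ := hy.exists_zpow_eq (mem_support.1 hay) (mem_support.1 hby)
    exact ⟨⟨y ^ i, zpow_mem hyG i⟩, hi⟩

theorem alternatingGroup_le_of_isConj_isCycle_mem {x y t : Equiv.Perm α}
    (hx : x.IsCycle) (hxy : IsConj x y) (ht : t.IsThreeCycle)
    (hxG : x ∈ G) (hyG : y ∈ G) (htG : t ∈ G) (hp : x.support.card.Prime)
    (hcard : Fintype.card α < 2 * x.support.card)
    (hcover : x.support ∪ y.support = Finset.univ) : alternatingGroup α ≤ G := by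
  obtain ⟨g, rfl⟩ := isConj_iff.1 hxy
  have hmeet : (x.support ∩ (g * x * g⁻¹).support).Nonempty := by
    rw [← Finset.card_pos]
    have := Finset.card_union_add_card_inter x.support (g * x * g⁻¹).support
    rw [hcover, Finset.card_univ, card_support_conj] at this
    omega
  have := isPretransitive_of_isCycle_mem_of_support_union hx hx.conj hxG hyG hmeet hcover
  exact alternatingGroup_le_of_isPreprimitive_of_isThreeCycle_mem
    (isPreprimitive_of_isCycle_mem_of_card_lt hx hxG hp hcard) ht htG

end PermutationGroups

theorem closure_eq_top_of_le_closure_image_val {G : Type*} [Group G] {H : Subgroup G} {S : Set H}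
    (h : H ≤ closure ((↑) '' S : Set G)) : closure S = ⊤ := by
  rw [← (map_injective H.subtype_injective).eq_iff, MonoidHom.map_closure,
    ← MonoidHom.range_eq_map, range_subtype]
  refine le_antisymm ((closure_le H).2 ?_) h
  rintro _ ⟨s, -, rfl⟩
  exact s.2

/-- The generation property of the theorem, for an arbitrary finite type: the alternating group on
`α` is generated by two terms of a triple of conjugate `k`-cycles with product `1`. Since `y` and
`z` are conjugate to `x`, only `x` is required to be a `k`-cycle. -/
def IsGeneratedByCycleTriple (α : Type*) [Fintype α] [DecidableEq α] (k : ℕ) : Prop :=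
  ∃ x y z : alternatingGroup α,
    (x : Equiv.Perm α).IsCycle ∧ (x : Equiv.Perm α).support.card = k ∧
    IsConj x y ∧ IsConj x z ∧ x * y * z = 1 ∧
    closure {x, y} = (⊤ : Subgroup (alternatingGroup α))

namespace IsGeneratedByCycleTriple

variable {α : Type*} [Fintype α] [DecidableEq α] {k : ℕ}

theorem of_conj {x g h t : Equiv.Perm α} (hx : x.IsCycle) (hxk : x.support.card = k)
    (hk : k.Prime) (hcard : Fintype.card α < 2 * k)
    (hg : g ∈ alternatingGroup α) (hh : h ∈ alternatingGroup α)
    (hprod : x * (g * x * g⁻¹) * (h * x * h⁻¹) = 1)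
    (hcover : x.support ∪ (g * x * g⁻¹).support = Finset.univ)
    (ht : t.IsThreeCycle) (htmem : t ∈ closure {x, g * x * g⁻¹}) :
    IsGeneratedByCycleTriple α k := by
  subst hxk
  have hxA : x ∈ alternatingGroup α := by
    have hsign : sign x ^ 3 = 1 := by
      simpa [pow_succ, mul_assoc, mul_comm, mul_left_comm] using congrArg sign hprod
    rwa [Int.units_pow_eq_pow_mod_two, pow_one] at hsign
  let X : alternatingGroup α := ⟨x, hxA⟩
  let g' : alternatingGroup α := ⟨g, hg⟩
  let h' : alternatingGroup α := ⟨h, hh⟩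
  refine ⟨X, g' * X * g'⁻¹, h' * X * h'⁻¹, hx, rfl, isConj_iff.2 ⟨g', rfl⟩,
    isConj_iff.2 ⟨h', rfl⟩, Subtype.ext hprod, closure_eq_top_of_le_closure_image_val ?_⟩
  rw [Set.image_pair]
  exact alternatingGroup_le_of_isConj_isCycle_mem hx (isConj_iff.2 ⟨g, rfl⟩) ht
    (subset_closure (Set.mem_insert _ _))
    (subset_closure (Set.mem_insert_of_mem _ rfl)) htmem hk hcard hcover

theorem of_pow_three_eq_one {x σ t : Equiv.Perm α} (hx : x.IsCycle) (hxk : x.support.card = k)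
    (hk : k.Prime) (hcard : Fintype.card α < 2 * k)
    (hσ : σ ^ 3 = 1) (hxσ : (x * σ) ^ 3 = 1)
    (hcover : x.support ∪ (σ * x * σ⁻¹).support = Finset.univ)
    (ht : t.IsThreeCycle) (htmem : t ∈ closure {x, σ * x * σ⁻¹}) :
    IsGeneratedByCycleTriple α k := by
  have hσA : σ ∈ alternatingGroup α := by
    have hsign : sign σ ^ 3 = 1 := by rw [← map_pow, hσ, map_one]
    rwa [Int.units_pow_eq_pow_mod_two, pow_one] at hsign
  have hσinv : σ⁻¹ * σ⁻¹ = σ := by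
    rw [← mul_inv_rev, inv_eq_iff_mul_eq_one, ← pow_two, ← pow_succ, hσ]
  refine of_conj hx hxk hk hcard hσA (inv_mem hσA) ?_ hcover ht htmem
  calc x * (σ * x * σ⁻¹) * (σ⁻¹ * x * σ⁻¹⁻¹)
      = x * σ * x * (σ⁻¹ * σ⁻¹) * x * σ := by group
    _ = (x * σ) ^ 3 := by rw [hσinv]; simp only [pow_succ, pow_zero, one_mul, mul_assoc]
    _ = 1 := hxσ

end IsGeneratedByCycleTriple

theorem isGeneratedByCycleTriple_fin_five : IsGeneratedByCycleTriple (Fin 5) 5 := by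
  have word_mem (x y : Equiv.Perm (Fin 5)) : x * y⁻¹ ∈ closure {x, y} := by aesop
  refine .of_pow_three_eq_one (x := c[0, 1, 2, 3, 4]) (σ := c[0, 2, 1])
    (List.isCycle_formPerm ?_ ?_) ?_ ?_ ?_ ?_ ?_ ?_ (card_support_eq_three_iff.1 ?_) (word_mem _ _)
    <;> decide +kernel

theorem isGeneratedByCycleTriple_fin_six : IsGeneratedByCycleTriple (Fin 6) 5 := by
  have word_mem (x y : Equiv.Perm (Fin 6)) : x ^ 2 * y * x * y⁻¹ ∈ closure {x, y} := by aesop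
  refine .of_pow_three_eq_one (x := c[0, 1, 2, 3, 4]) (σ := c[2, 4, 5])
    (List.isCycle_formPerm ?_ ?_) ?_ ?_ ?_ ?_ ?_ ?_ (card_support_eq_three_iff.1 ?_) (word_mem _ _)
    <;> decide +kernel

theorem isGeneratedByCycleTriple_fin_seven : IsGeneratedByCycleTriple (Fin 7) 7 := by
  have word_mem (x y : Equiv.Perm (Fin 7)) : x ^ 2 * y * x * y⁻¹ ∈ closure {x, y} := by aesop
  refine .of_pow_three_eq_one (x := c[0, 1, 2, 3, 4, 5, 6]) (σ := c[2, 6, 3])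
    (List.isCycle_formPerm ?_ ?_) ?_ ?_ ?_ ?_ ?_ ?_ (card_support_eq_three_iff.1 ?_) (word_mem _ _)
    <;> decide +kernel

theorem isGeneratedByCycleTriple_fin_eight : IsGeneratedByCycleTriple (Fin 8) 7 := by
  have word_mem (x y : Equiv.Perm (Fin 8)) : (x * y⁻¹) ^ 2 ∈ closure {x, y} := by aesop
  refine .of_conj (x := c[0, 1, 2, 3, 4, 5, 6])
    (g := c[0, 2, 4] * c[1, 7, 3]) (h := c[1, 5, 3, 2, 7])
    (List.isCycle_formPerm ?_ ?_) ?_ ?_ ?_ (mem_alternatingGroup.2 ?_) (mem_alternatingGroup.2 ?_)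
    ?_ ?_ (card_support_eq_three_iff.1 ?_) (word_mem _ _) <;> decide +kernel

theorem isGeneratedByCycleTriple_fin_nine : IsGeneratedByCycleTriple (Fin 9) 7 := by
  have word_mem (x y : Equiv.Perm (Fin 9)) : (x ^ 2 * y⁻¹) ^ 4 ∈ closure {x, y} := by aesop
  refine .of_pow_three_eq_one (x := c[0, 1, 2, 3, 4, 5, 6]) (σ := c[1, 3, 7] * c[4, 6, 8])
    (List.isCycle_formPerm ?_ ?_) ?_ ?_ ?_ ?_ ?_ ?_ (card_support_eq_three_iff.1 ?_) (word_mem _ _)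
    <;> decide +kernel

theorem isGeneratedByCycleTriple_fin_ten : IsGeneratedByCycleTriple (Fin 10) 7 := by
  have word_mem (x y : Equiv.Perm (Fin 10)) : (x ^ 2 * y⁻¹) ^ 7 ∈ closure {x, y} := by aesop
  refine .of_pow_three_eq_one (x := c[0, 1, 2, 3, 4, 5, 6])
    (σ := c[1, 7, 6] * c[2, 8, 5] * c[3, 9, 4])
    (List.isCycle_formPerm ?_ ?_) ?_ ?_ ?_ ?_ ?_ ?_ (card_support_eq_three_iff.1 ?_) (word_mem _ _)
    <;> decide +kernel

/-- For `5 ≤ n ≤ 10`, with `k = 5` for `n ∈ {5,6}` and `k = 7` otherwise, there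
exist three conjugate `k`-cycles in `A_n` with product `1` generating `A_n`. -/
theorem stmt_19 (n : ℕ) (h5 : 5 ≤ n) (h10 : n ≤ 10) :
    ∃ x y z : alternatingGroup (Fin n),
      (x : Equiv.Perm (Fin n)).IsCycle ∧
      (x : Equiv.Perm (Fin n)).support.card = (if n ≤ 6 then 5 else 7) ∧
      IsConj x y ∧ IsConj x z ∧ x * y * z = 1 ∧
      Subgroup.closure {x, y} = (⊤ : Subgroup (alternatingGroup (Fin n))) := by
  interval_cases n
  · exact isGeneratedByCycleTriple_fin_five
  · exact isGeneratedByCycleTriple_fin_six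
  · exact isGeneratedByCycleTriple_fin_seven
  · exact isGeneratedByCycleTriple_fin_eight
  · exact isGeneratedByCycleTriple_fin_nine
  · exact isGeneratedByCycleTriple_fin_ten
end
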